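/- arXiv:math/0409161 — 5 statements merged into one kernel-verified Lean document; each statement's English description precedes it below -/
import Mathlib

section
/- Let Λ be a left and right Noetherian ring and M a finitely generated left Λ-module. There are exact sequences 0 → Ext¹_{Λ^op}(Tr M, Λ) → M → M** → Ext²_{Λ^op}(Tr M, Λ) → 0 and 0 → Ext¹_Λ(M, Λ) → Tr M → (Tr M)** → Ext²_Λ(M, Λ) → 0, where the middle maps are the canonical evaluation homomorphisms. -/
/-!
Let `g : P₁ → P₀` present `M`. The point is that `Ext¹` and `Ext²` can be read off from a projective
presentation alone: extending `P₁ → P₀ → N → 0` to a projective resolution shows that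
`Ext¹(N, A)` is the group of maps `P₁ → A` killing `ker g` modulo those factoring through `g`
(`exists_extOne_pres`), and that `Ext²(N, A)` is `Hom(ker g, A)` modulo restrictions of maps
`P₁ → A` (`exists_extTwo_pres`).

Both `P₁ → P₀ → M → 0` and `P₀* → P₁* → Tr M → 0` are such presentations, because duals of finitely
generated projectives are projective. The kernels on the left are duals again:
`ker (P₀* → P₁*) ≅ M*` (`dualEquivKer`) and, since finitely generated projectives are reflexive
(`evalL_bijective`), `ker (P₁ → P₀) ≅ (Tr M)*` (`kerEquivDualTr`). Substituting these into the two
descriptions of Ext, and identifying `Pᵢ**` with `Pᵢ`, turns `Ext¹` into the kernel and `Ext²` into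
the cokernel of the evaluation map.
-/


open CategoryTheory

noncomputable section

/-- The `n`-th Ext group of `M` and `N` over `Λ`, as an object of `ModuleCat ℤ`
(computed in the abelian category of `Λ`-modules). -/
def extGrp (Λ : Type) [Ring Λ] (n : ℕ) (M N : ModuleCat Λ) : ModuleCat ℤ :=
  ((_root_.Ext ℤ (ModuleCat Λ) n).obj (Opposite.op M)).obj N

section Dual

variable (Λ : Type) [Ring Λ]

/-- The canonical evaluation map from a left module to its double dual. -/
def evalL (M : Type) [AddCommGroup M] [Module Λ M] :
    M →ₗ[Λ] ((M →ₗ[Λ] Λ) →ₗ[Λᵐᵒᵖ] Λ) where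
  toFun m := { toFun := fun f => f m, map_add' := fun _ _ => rfl, map_smul' := fun _ _ => rfl }
  map_add' m m' := by ext f; simp
  map_smul' a m := by ext f; simp

/-- The canonical evaluation map from a right module to its double dual. -/
def evalR (N : Type) [AddCommGroup N] [Module Λᵐᵒᵖ N] :
    N →ₗ[Λᵐᵒᵖ] ((N →ₗ[Λᵐᵒᵖ] Λ) →ₗ[Λ] Λ) where
  toFun n := { toFun := fun f => f n, map_add' := fun _ _ => rfl, map_smul' := fun _ _ => rfl }
  map_add' n n' := by ext f; simp
  map_smul' a n := by ext f; simp

variable {Λ}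

/-- Dualizing a map of left modules (precomposition on `Hom(-,Λ)`). -/
def dualMap {P Q : Type} [AddCommGroup P] [Module Λ P] [AddCommGroup Q] [Module Λ Q]
    (g : P →ₗ[Λ] Q) : (Q →ₗ[Λ] Λ) →ₗ[Λᵐᵒᵖ] (P →ₗ[Λ] Λ) where
  toFun f := f.comp g
  map_add' _ _ := rfl
  map_smul' _ _ := rfl

/-- Dualizing a map of right modules (precomposition on `Hom(-,Λ)`). -/
def dualMapR {P Q : Type} [AddCommGroup P] [Module Λᵐᵒᵖ P] [AddCommGroup Q] [Module Λᵐᵒᵖ Q]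
    (g : P →ₗ[Λᵐᵒᵖ] Q) : (Q →ₗ[Λᵐᵒᵖ] Λ) →ₗ[Λ] (P →ₗ[Λᵐᵒᵖ] Λ) where
  toFun f := f.comp g
  map_add' _ _ := rfl
  map_smul' _ _ := rfl

end Dual

/-- A projective presentation `P₁ → P₀ → M → 0` by finitely generated projectives. -/
structure Presentation (Λ : Type) [Ring Λ] (M : Type) [AddCommGroup M] [Module Λ M] where
  P₁ : Type
  P₀ : Type
  [acg₁ : AddCommGroup P₁]
  [acg₀ : AddCommGroup P₀]
  [mod₁ : Module Λ P₁]
  [mod₀ : Module Λ P₀]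
  [fin₁ : Module.Finite Λ P₁]
  [fin₀ : Module.Finite Λ P₀]
  [proj₁ : Module.Projective Λ P₁]
  [proj₀ : Module.Projective Λ P₀]
  g : P₁ →ₗ[Λ] P₀
  π : P₀ →ₗ[Λ] M
  surj : Function.Surjective π
  exact : LinearMap.range g = LinearMap.ker π

attribute [instance] Presentation.acg₁ Presentation.acg₀ Presentation.mod₁ Presentation.mod₀
  Presentation.fin₁ Presentation.fin₀ Presentation.proj₁ Presentation.proj₀

/-- The Auslander transpose `Tr M = Coker(P₀* → P₁*)` attached to a projective
presentation; it is a right `Λ`-module. -/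
abbrev Presentation.Tr {Λ : Type} [Ring Λ] {M : Type} [AddCommGroup M] [Module Λ M]
    (pr : Presentation Λ M) : Type :=
  (pr.P₁ →ₗ[Λ] Λ) ⧸ LinearMap.range (dualMap pr.g)

/-- A resolution of a left module by finitely generated projective modules. -/
structure FGProjRes (Λ : Type) [Ring Λ] (M : Type) [AddCommGroup M] [Module Λ M] where
  P : ℕ → Type
  [acg : ∀ n, AddCommGroup (P n)]
  [mod : ∀ n, Module Λ (P n)]
  [fin : ∀ n, Module.Finite Λ (P n)]
  [proj : ∀ n, Module.Projective Λ (P n)]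
  d : ∀ n, P (n + 1) →ₗ[Λ] P n
  π : P 0 →ₗ[Λ] M
  surj : Function.Surjective π
  exact0 : LinearMap.range (d 0) = LinearMap.ker π
  exact : ∀ n, LinearMap.range (d (n + 1)) = LinearMap.ker (d n)

attribute [instance] FGProjRes.acg FGProjRes.mod FGProjRes.fin FGProjRes.proj

/-- Cocycles in degree `t` of the dualized complex `Hom(P•, Λ)`. -/
abbrev FGProjRes.extSub {Λ : Type} [Ring Λ] {M : Type} [AddCommGroup M] [Module Λ M]
    (R : FGProjRes Λ M) (t : ℕ) : Submodule Λᵐᵒᵖ (R.P t →ₗ[Λ] Λ) :=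
  LinearMap.ker (dualMap (R.d t))

/-- Coboundaries in degree `t` of the dualized complex `Hom(P•, Λ)`. -/
def FGProjRes.extBdry {Λ : Type} [Ring Λ] {M : Type} [AddCommGroup M] [Module Λ M]
    (R : FGProjRes Λ M) : (t : ℕ) → Submodule Λᵐᵒᵖ (R.extSub t)
  | 0 => ⊥
  | (t + 1) => (LinearMap.range (dualMap (R.d t))).comap (R.extSub (t + 1)).subtype

/-- `Ext^t_Λ(M, Λ)` computed from the resolution `R`, as a right `Λ`-module. -/
abbrev FGProjRes.extQ {Λ : Type} [Ring Λ] {M : Type} [AddCommGroup M] [Module Λ M]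
    (R : FGProjRes Λ M) (t : ℕ) : Type :=
  @HasQuotient.Quotient _ _ (@Submodule.hasQuotient Λᵐᵒᵖ (R.extSub t) _ _ _) (R.extBdry t)

/-- A resolution of a right module by finitely generated projective modules. -/
structure FGProjResR (Λ : Type) [Ring Λ] (N : Type) [AddCommGroup N] [Module Λᵐᵒᵖ N] where
  P : ℕ → Type
  [acg : ∀ n, AddCommGroup (P n)]
  [mod : ∀ n, Module Λᵐᵒᵖ (P n)]
  [fin : ∀ n, Module.Finite Λᵐᵒᵖ (P n)]
  [proj : ∀ n, Module.Projective Λᵐᵒᵖ (P n)]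
  d : ∀ n, P (n + 1) →ₗ[Λᵐᵒᵖ] P n
  π : P 0 →ₗ[Λᵐᵒᵖ] N
  surj : Function.Surjective π
  exact0 : LinearMap.range (d 0) = LinearMap.ker π
  exact : ∀ n, LinearMap.range (d (n + 1)) = LinearMap.ker (d n)

attribute [instance] FGProjResR.acg FGProjResR.mod FGProjResR.fin FGProjResR.proj

/-- Cocycles in degree `t` of the dualized complex `Hom(P•, Λ)` (right module case). -/
abbrev FGProjResR.extSub {Λ : Type} [Ring Λ] {N : Type} [AddCommGroup N] [Module Λᵐᵒᵖ N]
    (R : FGProjResR Λ N) (t : ℕ) : Submodule Λ (R.P t →ₗ[Λᵐᵒᵖ] Λ) :=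
  LinearMap.ker (dualMapR (R.d t))

/-- Coboundaries in degree `t` of the dualized complex (right module case). -/
def FGProjResR.extBdry {Λ : Type} [Ring Λ] {N : Type} [AddCommGroup N] [Module Λᵐᵒᵖ N]
    (R : FGProjResR Λ N) : (t : ℕ) → Submodule Λ (R.extSub t)
  | 0 => ⊥
  | (t + 1) => (LinearMap.range (dualMapR (R.d t))).comap (R.extSub (t + 1)).subtype

/-- `Ext^t_{Λᵒᵖ}(N, Λ)` computed from the resolution `R`, as a left `Λ`-module. -/
abbrev FGProjResR.extQ {Λ : Type} [Ring Λ] {N : Type} [AddCommGroup N] [Module Λᵐᵒᵖ N]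
    (R : FGProjResR Λ N) (t : ℕ) : Type :=
  @HasQuotient.Quotient _ _ (@Submodule.hasQuotient Λ (R.extSub t) _ _ _) (R.extBdry t)

/-- `pd_Λ M ≤ n`, via the standard characterization `Ext^{n+1}(M, -) = 0`. -/
def pdLE (Λ : Type) [Ring Λ] (M : ModuleCat Λ) (n : ℕ) : Prop :=
  ∀ N : ModuleCat Λ, Subsingleton (extGrp Λ (n + 1) M N)

/-- `id_Λ Λ ≤ n` (left self-injective dimension), via `Ext^{n+1}(-, Λ) = 0`. -/
def idLambdaLE (Λ : Type) [Ring Λ] (n : ℕ) : Prop :=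
  ∀ N : ModuleCat Λ, Subsingleton (extGrp Λ (n + 1) N (ModuleCat.of Λ Λ))

/-- `id_{Λᵒᵖ} Λ ≤ n` (right self-injective dimension). -/
def idLambdaOpLE (Λ : Type) [Ring Λ] (n : ℕ) : Prop :=
  ∀ N : ModuleCat Λᵐᵒᵖ, Subsingleton (extGrp Λᵐᵒᵖ (n + 1) N (ModuleCat.of Λᵐᵒᵖ Λ))

/-- `Λ` is `m`-Gorenstein, via Auslander's characterization:
`s.grade Ext^i_Λ(M, Λ) ≥ i` for every finitely generated left `Λ`-module `M`
and all `1 ≤ i ≤ m` ([FGR, Theorem 3.7]). -/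
def IsGorensteinLE (Λ : Type) [Ring Λ] (m : ℕ) : Prop :=
  ∀ (M : Type) [AddCommGroup M] [Module Λ M] [Module.Finite Λ M] (R : FGProjRes Λ M)
    (i : ℕ), 1 ≤ i → i ≤ m → ∀ X : Submodule Λᵐᵒᵖ (R.extQ i), ∀ j < i,
      Subsingleton (extGrp Λᵐᵒᵖ j (ModuleCat.of Λᵐᵒᵖ X) (ModuleCat.of Λᵐᵒᵖ Λ))

/-- `Λ` is left quasi `∞`-Gorenstein: `grade Ext^i_Λ(M, Λ) ≥ i` for every finitely
generated left `Λ`-module `M` and all `i ≥ 1`. -/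
def LeftQuasiInfGorenstein (Λ : Type) [Ring Λ] : Prop :=
  ∀ (M : Type) [AddCommGroup M] [Module Λ M] [Module.Finite Λ M] (R : FGProjRes Λ M)
    (i : ℕ), 1 ≤ i → ∀ j < i,
      Subsingleton (extGrp Λᵐᵒᵖ j (ModuleCat.of Λᵐᵒᵖ (R.extQ i)) (ModuleCat.of Λᵐᵒᵖ Λ))

/-- `M` is pseudo-null, i.e. `s.grade M ≥ 2`: every submodule of `M` has grade at
least `2` (equivalently `Hom_Λ(M, I'₀ ⊕ I'₁) = 0`, by [CSS, Lemma 1.1]). -/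
def IsPseudoNull (Λ : Type) [Ring Λ] (M : Type) [AddCommGroup M] [Module Λ M] : Prop :=
  ∀ X : Submodule Λ M, ∀ j < 2,
    Subsingleton (extGrp Λ j (ModuleCat.of Λ X) (ModuleCat.of Λ Λ))

/-- `M` is `k`-torsionfree: `Ext^j_{Λᵒᵖ}(Tr M, Λ) = 0` for all `1 ≤ j ≤ k`. -/
def KTorsionfree (Λ : Type) [Ring Λ] (k : ℕ) (M : Type) [AddCommGroup M] [Module Λ M] : Prop :=
  ∀ pr : Presentation Λ M, ∀ j, 1 ≤ j → j ≤ k →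
    Subsingleton (extGrp Λᵐᵒᵖ j (ModuleCat.of Λᵐᵒᵖ pr.Tr) (ModuleCat.of Λᵐᵒᵖ Λ))

end

noncomputable section

/-! ### Resolutions extending a projective presentation -/

section PrescribedResolution

open CategoryTheory.Limits

variable {C : Type*} [Category* C] [Abelian C] [EnoughProjectives C]
  {P₁ P₀ Z : C} (g : P₁ ⟶ P₀) (π : P₀ ⟶ Z)

lemma syzygy_comp {X Y : C} (f : X ⟶ Y) : Projective.d f ≫ f = 0 :=
  (Category.assoc _ _ _).trans ((congrArg _ (kernel.condition f)).trans comp_zero)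

/-- The chain complex `⋯ ⟶ P₂ ⟶ P₁ ⟶ P₀` whose first differential is `g` and in which every later
term is a chosen projective mapping onto the kernel of the preceding differential. -/
def resComplex : ChainComplex C ℕ :=
  ChainComplex.mk' P₀ P₁ g (fun f => ⟨_, Projective.d f, syzygy_comp f⟩)

lemma resComplex_d_1_0 : (resComplex g).d 1 0 = g :=
  ChainComplex.mk'_d_1_0 ..

lemma resComplex_exactAt_succ (n : ℕ) : (resComplex g).ExactAt (n + 1) := by
  rw [HomologicalComplex.exactAt_iff' _ (n + 1 + 1) (n + 1) n (by simp) (by simp)]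
  refine (ShortComplex.exact_iff_of_iso (ShortComplex.isoMk
    (S₁ := (resComplex g).sc' (n + 1 + 1) (n + 1) n)
    (S₂ := ShortComplex.mk _ _ (syzygy_comp ((resComplex g).d (n+1) n)))
    (ChainComplex.mk'XIso P₀ P₁ g (fun f => ⟨_, Projective.d f, syzygy_comp f⟩) n) (Iso.refl _) (Iso.refl _) ?_ ?_)).2 (exact_d_f _)
  · exact (ChainComplex.mk'_d _ _ _ _ n).symm.trans (Category.comp_id _).symm
  · exact (Category.id_comp _).trans (Category.comp_id _).symm

instance [Projective P₁] [Projective P₀] (n : ℕ) : Projective ((resComplex g).X n) := by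
  obtain (_ | _ | n) := n
  · change Projective P₀; infer_instance
  · change Projective P₁; infer_instance
  · exact Projective.of_iso (ChainComplex.mk'XIso P₀ P₁ g
      (fun f => ⟨_, Projective.d f, syzygy_comp f⟩) n).symm (Projective.projective_over _)

/-- An exact sequence `P₁ ⟶ P₀ ⟶ Z ⟶ 0` with projective terms extends to a projective resolution
of `Z`. -/
def resOfPresentation [Projective P₁] [Projective P₀] [Epi π] (w : g ≫ π = 0)
    (ex : (ShortComplex.mk g π w).Exact) : ProjectiveResolution Z where
  complex := resComplex g
  π := (ChainComplex.toSingle₀Equiv _ _).symm ⟨π, by rw [resComplex_d_1_0]; exact w⟩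
  quasiIso := ⟨fun n => by
    cases n
    · rw [ChainComplex.quasiIsoAt₀_iff, ShortComplex.quasiIso_iff_of_zeros']
      · refine (ShortComplex.exact_and_epi_g_iff_of_iso ?_).2
          ⟨ex, by dsimp; infer_instance⟩
        refine ShortComplex.isoMk (Iso.refl _) (Iso.refl _) (Iso.refl _) ?_ ?_
        · exact (Category.id_comp _).trans
            ((resComplex_d_1_0 g).symm.trans (Category.comp_id _).symm)
        · refine (Category.id_comp _).trans (Eq.trans ?_ (Category.comp_id _).symm)
          exact (ChainComplex.toSingle₀Equiv_symm_apply_f_zero (C := resComplex g) (X := Z) π _).symm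
      all_goals rfl
    · rw [quasiIsoAt_iff_exactAt']
      · apply resComplex_exactAt_succ
      · apply ChainComplex.exactAt_succ_single_obj⟩

end PrescribedResolution

/-! ### Low-degree Ext from a projective presentation -/

section Homology

/-- If the cocycles of degree `n + 1` are exactly the image of `r : B → Kⁿ⁺¹`, then `Hⁿ⁺¹(K)` is a
quotient of `B`, with kernel the preimage of the coboundaries. This allows `B` to be chosen as the
group of homomorphisms that is convenient for comparison with duals. -/
lemma exists_homology_pres {k : Type} [Ring k] (K : CochainComplex (ModuleCat k) ℕ) (n : ℕ) {B : Type*}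
    [AddCommGroup B] (r : B →+ K.X (n + 1))
    (hr : ∀ x, (K.d (n + 1) (n + 2)).hom x = 0 ↔ ∃ b, r b = x) :
    ∃ p : B →+ K.homology (n + 1), Function.Surjective p ∧
      ∀ b, p b = 0 ↔ ∃ y, (K.d n (n + 1)).hom y = r b := by
  let S := K.sc' n (n + 1) (n + 2)
  let e : K.homology (n + 1) ≅ S.moduleCatLeftHomologyData.H :=
    ShortComplex.homologyMapIso (K.isoSc' n (n + 1) (n + 2) (by simp) (by simp)) ≪≫
      S.moduleCatHomologyIso
  let q : B →+ LinearMap.ker S.g.hom :=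
    { toFun := fun b => ⟨r b, (hr _).2 ⟨b, rfl⟩⟩
      map_zero' := Subtype.ext (map_zero r)
      map_add' := fun a b => Subtype.ext (map_add r a b) }
  have hq : Function.Surjective q := fun ⟨x, hx⟩ => by
    obtain ⟨b, hb⟩ := (hr x).1 hx
    exact ⟨b, Subtype.ext hb⟩
  let s : LinearMap.ker S.g.hom →+
      LinearMap.ker S.g.hom ⧸ LinearMap.range S.moduleCatToCycles :=
    (Submodule.mkQ _).toAddMonoidHom
  let i : (LinearMap.ker S.g.hom ⧸ LinearMap.range S.moduleCatToCycles) ≃ₗ[k]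
      K.homology (n + 1) := e.symm.toLinearEquiv
  refine ⟨i.toLinearMap.toAddMonoidHom.comp (s.comp q), ?_, fun b => ?_⟩
  · exact i.surjective.comp ((Submodule.mkQ_surjective _).comp hq)
  · change i (s (q b)) = 0 ↔ _
    rw [map_eq_zero_iff i i.injective]
    change Submodule.Quotient.mk (q b) = 0 ↔ _
    rw [Submodule.Quotient.mk_eq_zero]
    constructor
    · rintro ⟨y, hy⟩
      exact ⟨y, congrArg Subtype.val hy⟩
    · rintro ⟨y, hy⟩
      exact ⟨y, Subtype.ext hy⟩

end Homology

section Ext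

variable {R : Type} [Ring R]

/-- In the complex `Hom(Q, A)`, a cochain on `Qₙ₊₁` is a cocycle iff it vanishes on the kernel of
`Qₙ₊₁ → Qₙ`, because `Q` is exact there. -/
lemma cocycle_iff {N A : ModuleCat.{0} R} (Q : ProjectiveResolution N) (n : ℕ)
    (f : Q.complex.X (n + 1) ⟶ A) :
    ((Q.complex.linearYonedaObj ℤ A).d (n + 1) (n + 2)).hom f = 0 ↔
      ∀ x, (Q.complex.d (n + 1) n).hom x = 0 → f.hom x = 0 := by
  change Q.complex.d (n + 2) (n + 1) ≫ f = 0 ↔ _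
  constructor
  · intro h x hx
    obtain ⟨y, rfl⟩ := (ShortComplex.moduleCat_exact_iff _).1 (Q.exact_succ n) x hx
    exact congrArg (fun t : Q.complex.X (n + 2) ⟶ A => t.hom y) h
  · intro h
    ext y
    exact h _ (congrArg (fun t : Q.complex.X (n + 2) ⟶ Q.complex.X n => t.hom y)
      (Q.complex.d_comp_d (n + 2) (n + 1) n))

variable {P₁ P₀ N A : Type} [AddCommGroup P₁] [AddCommGroup P₀]
  [AddCommGroup N] [AddCommGroup A] [Module R P₁] [Module R P₀] [Module R N] [Module R A]

lemma exists_factor {e : P₁ →ₗ[R] P₀} (he : Function.Surjective e) (f : P₁ →ₗ[R] A)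
    (h : ∀ x, e x = 0 → f x = 0) : ∃ f' : P₀ →ₗ[R] A, ∀ x, f' (e x) = f x := by
  refine ⟨((LinearMap.ker e).liftQ f h).comp
    (e.quotKerEquivOfSurjective he).symm.toLinearMap, fun x => ?_⟩
  have : (e.quotKerEquivOfSurjective he).symm (e x) = Submodule.Quotient.mk x := by
    rw [LinearEquiv.symm_apply_eq]; rfl
  change (LinearMap.ker e).liftQ f h ((e.quotKerEquivOfSurjective he).symm (e x)) = f x
  rw [this]
  exact Submodule.liftQ_apply ..

variable [Module.Projective R P₁] [Module.Projective R P₀]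

/-- The resolution of a module extending a presentation by projectives. -/
def moduleRes (g : P₁ →ₗ[R] P₀) (π : P₀ →ₗ[R] N) (hπ : Function.Surjective π)
    (ex : LinearMap.range g = LinearMap.ker π) : ProjectiveResolution (ModuleCat.of R N) :=
  haveI : Epi (ModuleCat.ofHom π) := (ModuleCat.epi_iff_surjective _).2 hπ
  resOfPresentation (ModuleCat.ofHom g) (ModuleCat.ofHom π)
    (by ext x; exact (ex.le ⟨x, rfl⟩ : g x ∈ LinearMap.ker π))
    ((ShortComplex.moduleCat_exact_iff _).2 fun x hx => ex.ge hx)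

lemma moduleRes_d_1_0 (g : P₁ →ₗ[R] P₀) (π : P₀ →ₗ[R] N) (hπ : Function.Surjective π)
    (ex : LinearMap.range g = LinearMap.ker π) :
    (moduleRes g π hπ ex).complex.d 1 0 = ModuleCat.ofHom g :=
  resComplex_d_1_0 _

variable (A) in
/-- `Ext¹(N, A)` is the quotient of the homomorphisms `P₁ → A` vanishing on `ker g` by those
that factor through `g`. -/
lemma exists_extOne_pres (g : P₁ →ₗ[R] P₀) (π : P₀ →ₗ[R] N) (hπ : Function.Surjective π)
    (ex : LinearMap.range g = LinearMap.ker π) (B : AddSubgroup (P₁ →ₗ[R] A))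
    (hB : ∀ f, f ∈ B ↔ ∀ x, g x = 0 → f x = 0) :
    ∃ p : B →+ extGrp R 1 (ModuleCat.of R N) (ModuleCat.of R A),
      Function.Surjective p ∧ ∀ f, p f = 0 ↔ ∃ h : P₀ →ₗ[R] A, h.comp g = f.1 := by
  let Q := moduleRes g π hπ ex
  let K := Q.complex.linearYonedaObj ℤ (ModuleCat.of R A)
  let r : B →+ K.X 1 :=
    { toFun := fun f => ModuleCat.ofHom f.1
      map_zero' := rfl
      map_add' := fun _ _ => rfl }
  have hd : Q.complex.d 1 0 = ModuleCat.ofHom g := moduleRes_d_1_0 ..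
  obtain ⟨p, hp, hp'⟩ := exists_homology_pres K 0 r (by
    intro x
    refine (cocycle_iff Q 0 x).trans ?_
    rw [hd]
    constructor
    · intro h
      exact ⟨⟨ModuleCat.Hom.hom x, (hB _).2 h⟩, rfl⟩
    · rintro ⟨b, rfl⟩
      exact (hB _).1 b.2)
  let i := ((Q.isoExt (R := ℤ) 1 (ModuleCat.of R A)).symm.toLinearEquiv)
  refine ⟨i.toLinearMap.toAddMonoidHom.comp p, i.surjective.comp hp, fun f => ?_⟩
  change i (p f) = 0 ↔ _
  rw [map_eq_zero_iff i i.injective, hp']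
  change (∃ y : Q.complex.X 0 ⟶ ModuleCat.of R A, Q.complex.d 1 0 ≫ y = ModuleCat.ofHom f.1) ↔ _
  rw [hd]
  constructor
  · rintro ⟨y, hy⟩
    exact ⟨y.hom, congrArg ModuleCat.Hom.hom hy⟩
  · rintro ⟨h, hh⟩
    exact ⟨ModuleCat.ofHom h, congrArg ModuleCat.ofHom hh⟩

variable (A) in
/-- `Ext²(N, A)` is the quotient of `Hom(ker g, A)` by the homomorphisms that extend to `P₁`. -/
lemma exists_extTwo_pres (g : P₁ →ₗ[R] P₀) (π : P₀ →ₗ[R] N) (hπ : Function.Surjective π)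
    (ex : LinearMap.range g = LinearMap.ker π) :
    ∃ p : (LinearMap.ker g →ₗ[R] A) →+ extGrp R 2 (ModuleCat.of R N) (ModuleCat.of R A),
      Function.Surjective p ∧
        ∀ f, p f = 0 ↔ ∃ h : P₁ →ₗ[R] A, h.comp (LinearMap.ker g).subtype = f := by
  let Q := moduleRes g π hπ ex
  let K := Q.complex.linearYonedaObj ℤ (ModuleCat.of R A)
  have hd : Q.complex.d 1 0 = ModuleCat.ofHom g := moduleRes_d_1_0 ..
  let d : Q.complex.X 2 →ₗ[R] P₁ := (Q.complex.d 2 1).hom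
  have hgd : ∀ y, g (d y) = 0 := fun y => by
    have := congrArg (fun t : Q.complex.X 2 ⟶ Q.complex.X 0 => t.hom y)
      (Q.complex.d_comp_d 2 1 0)
    rw [hd] at this
    exact this
  let e : Q.complex.X 2 →ₗ[R] LinearMap.ker g := d.codRestrict _ hgd
  have he : Function.Surjective e := fun ⟨x, hx⟩ => by
    obtain ⟨y, hy⟩ := (ShortComplex.moduleCat_exact_iff _).1 (Q.exact_succ 0) x (by
      change (Q.complex.d 1 0).hom x = 0
      rw [hd]; exact hx)
    exact ⟨y, Subtype.ext hy⟩
  let r : (LinearMap.ker g →ₗ[R] A) →+ K.X 2 :=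
    { toFun := fun f => ModuleCat.ofHom (f.comp e)
      map_zero' := rfl
      map_add' := fun _ _ => rfl }
  obtain ⟨p, hp, hp'⟩ := exists_homology_pres K 1 r (by
    intro x
    refine (cocycle_iff Q 1 x).trans ?_
    constructor
    · intro h
      obtain ⟨f, hf⟩ := exists_factor he (ModuleCat.Hom.hom x)
        fun y hy => h y (congrArg Subtype.val hy)
      exact ⟨f, ModuleCat.hom_ext (LinearMap.ext hf)⟩
    · rintro ⟨f, rfl⟩ y hy
      exact (congrArg f (Subtype.ext hy : e y = 0)).trans (map_zero f))
  let i := ((Q.isoExt (R := ℤ) 2 (ModuleCat.of R A)).symm.toLinearEquiv)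
  refine ⟨i.toLinearMap.toAddMonoidHom.comp p, i.surjective.comp hp, fun f => ?_⟩
  change i (p f) = 0 ↔ _
  rw [map_eq_zero_iff i i.injective, hp']
  change (∃ y : Q.complex.X 1 ⟶ ModuleCat.of R A,
    Q.complex.d 2 1 ≫ y = ModuleCat.ofHom (f.comp e)) ↔ _
  constructor
  · rintro ⟨y, hy⟩
    refine ⟨y.hom, LinearMap.ext fun x => ?_⟩
    obtain ⟨z, rfl⟩ := he x
    exact congrArg (fun t : Q.complex.X 2 ⟶ ModuleCat.of R A => t.hom z) hy
  · rintro ⟨h, rfl⟩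
    exact ⟨ModuleCat.ofHom h, rfl⟩

end Ext

/-! ### Finitely generated projectives and their duals -/

section Dual

variable {Λ : Type} [Ring Λ] (P : Type) [AddCommGroup P] [Module Λ P] [Module.Finite Λ P]
  [Module.Projective Λ P]

/-- The dual basis lemma: the `c i` are coordinate functionals for the generators `e i`. -/
lemma exists_dualBasis : ∃ (n : ℕ) (c : Fin n → P →ₗ[Λ] Λ) (e : Fin n → P),
    ∀ x, ∑ i, c i x • e i = x := by
  obtain ⟨n, f, s, -, -, h⟩ := Module.Finite.exists_comp_eq_id_of_projective Λ P
  refine ⟨n, fun i => (LinearMap.proj i).comp s, fun i => f (Pi.single i 1), fun x => ?_⟩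
  have hx : f (s x) = x := LinearMap.congr_fun h x
  refine Eq.trans ?_ hx
  conv_rhs => rw [← Finset.univ_sum_single (s x), map_sum]
  refine Finset.sum_congr rfl fun i _ => ?_
  rw [LinearMap.comp_apply, LinearMap.proj_apply, ← map_smul, ← Pi.single_smul, smul_eq_mul,
    mul_one]

/-- Finitely generated projective modules are reflexive. -/
lemma evalL_bijective : Function.Bijective (evalL Λ P) := by
  obtain ⟨n, c, e, h⟩ := exists_dualBasis (Λ := Λ) P
  constructor
  · refine (injective_iff_map_eq_zero _).2 fun x hx => ?_
    rw [← h x]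
    exact Finset.sum_eq_zero fun i _ => by
      rw [show c i x = 0 from congrArg (fun F => F (c i)) hx, zero_smul]
  · intro F
    refine ⟨∑ i, F (c i) • e i, LinearMap.ext fun φ => ?_⟩
    -- `F` is determined by its values on the coordinates, which generate `P*`.
    have hφ : φ = ∑ i, MulOpposite.op (φ (e i)) • c i := by
      ext x
      conv_lhs => rw [← h x]
      simp
    conv_rhs => rw [hφ]
    change φ (∑ i, F (c i) • e i) = _
    simp

/-- The dual of a finitely generated projective is projective: the dual basis exhibits it as a direct
summand of `Λⁿ`. -/
instance : Module.Projective Λᵐᵒᵖ (P →ₗ[Λ] Λ) := by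
  obtain ⟨n, c, e, h⟩ := exists_dualBasis (Λ := Λ) P
  have : Module.Free Λᵐᵒᵖ Λ :=
    Module.Free.of_equiv
      ({ MulOpposite.opAddEquiv.symm with map_smul' := fun _ _ => rfl } : Λᵐᵒᵖ ≃ₗ[Λᵐᵒᵖ] Λ)
  refine Module.Projective.of_split (R := Λᵐᵒᵖ) (M := Fin n → Λ)
    (LinearMap.pi fun i =>
      { toFun := fun φ => φ (e i), map_add' := fun _ _ => rfl, map_smul' := fun _ _ => rfl })
    { toFun := fun a => ∑ i, MulOpposite.op (a i) • c i
      map_add' := fun a b => by simp [add_smul, Finset.sum_add_distrib]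
      map_smul' := fun r a => by simp [Finset.smul_sum, mul_smul] } ?_
  ext φ x
  conv_rhs => rw [← h x]
  simp

end Dual

/-- A homomorphism with the same kernel as a surjection `p : B → E` induces an injection on `E`. -/
lemma exists_injective_desc {B E X : Type*} [AddCommGroup B] [AddCommGroup E] [AddCommGroup X]
    (p : B →+ E) (hp : Function.Surjective p) (q : B →+ X) (h : ∀ b, p b = 0 ↔ q b = 0) :
    ∃ α : E →+ X, Function.Injective α ∧ ∀ b, α (p b) = q b := by
  have hα : ∀ b, p.liftOfSurjective hp ⟨q, fun b hb => (h b).1 hb⟩ (p b) = q b := fun b =>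
    AddMonoidHom.liftOfRightInverse_comp_apply ..
  refine ⟨_, (injective_iff_map_eq_zero _).2 fun x hx => ?_, hα⟩
  obtain ⟨b, rfl⟩ := hp x
  exact (h b).2 ((hα b).symm.trans hx)

/-! ### The module and its transpose -/

section Transpose

variable {Λ : Type} [Ring Λ] {M : Type} [AddCommGroup M] [Module Λ M] (pr : Presentation Λ M)

/-- The isomorphism `M* ≅ ker (P₀* → P₁*)` induced by `P₀ → M`. -/
def dualEquivKer : (M →ₗ[Λ] Λ) ≃ₗ[Λᵐᵒᵖ] LinearMap.ker (dualMap pr.g) :=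
  LinearEquiv.ofBijective
    ((dualMap pr.π).codRestrict _ fun φ => LinearMap.ext fun y =>
      (congrArg φ (pr.exact.le ⟨y, rfl⟩ : pr.π (pr.g y) = 0)).trans (map_zero φ)) <| by
    constructor
    · refine (injective_iff_map_eq_zero _).2 fun φ hφ => LinearMap.ext fun m => ?_
      obtain ⟨x, rfl⟩ := pr.surj m
      exact LinearMap.congr_fun (congrArg Subtype.val hφ) x
    · rintro ⟨φ, hφ⟩
      obtain ⟨φ', h⟩ := exists_factor pr.surj φ fun x hx => by
        obtain ⟨y, rfl⟩ := pr.exact.ge hx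
        exact LinearMap.congr_fun hφ y
      exact ⟨φ', Subtype.ext (LinearMap.ext h)⟩

lemma dualEquivKer_apply (φ : M →ₗ[Λ] Λ) (x : pr.P₀) :
    (dualEquivKer pr φ).1 x = φ (pr.π x) := rfl

/-- The map `ker (P₁ → P₀) → (Tr M)*` under which `y` acts on the class of `f` as `f y`. -/
def kerToDualTr : LinearMap.ker pr.g →ₗ[Λ] (pr.Tr →ₗ[Λᵐᵒᵖ] Λ) where
  toFun y := (LinearMap.range (dualMap pr.g)).liftQ (evalL Λ pr.P₁ y) (by
    rintro _ ⟨φ, rfl⟩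
    exact (congrArg φ y.2).trans (map_zero φ))
  map_add' y z := by
    refine LinearMap.ext fun x => ?_
    obtain ⟨f, rfl⟩ := Submodule.mkQ_surjective _ x
    exact map_add f y.1 z.1
  map_smul' a y := by
    refine LinearMap.ext fun x => ?_
    obtain ⟨f, rfl⟩ := Submodule.mkQ_surjective _ x
    exact map_smul f a y.1

/-- The map `kerToDualTr` is an isomorphism: a functional on `Tr M` is an element of `P₁** = P₁`
that vanishes on the image of `P₀*`, and `P₀` is torsionless. -/
def kerEquivDualTr : LinearMap.ker pr.g ≃ₗ[Λ] (pr.Tr →ₗ[Λᵐᵒᵖ] Λ) :=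
  LinearEquiv.ofBijective (kerToDualTr pr) <| by
    constructor
    · refine (injective_iff_map_eq_zero _).2 fun y hy => Subtype.ext ?_
      refine (injective_iff_map_eq_zero _).1 (evalL_bijective (Λ := Λ) pr.P₁).1 _ ?_
      exact LinearMap.ext fun f => LinearMap.congr_fun hy (Submodule.mkQ _ f)
    · intro ψ
      obtain ⟨y, hy⟩ := (evalL_bijective (Λ := Λ) pr.P₁).2 (ψ.comp (Submodule.mkQ _))
      have hf : ∀ f : pr.P₁ →ₗ[Λ] Λ, f y = ψ (Submodule.mkQ _ f) := LinearMap.congr_fun hy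
      refine ⟨⟨y, (injective_iff_map_eq_zero _).1 (evalL_bijective (Λ := Λ) pr.P₀).1 _ ?_⟩, ?_⟩
      · refine LinearMap.ext fun φ => ?_
        have h0 : Submodule.mkQ (LinearMap.range (dualMap pr.g)) (dualMap pr.g φ) = 0 :=
          (Submodule.Quotient.mk_eq_zero _).2 ⟨φ, rfl⟩
        exact (hf (dualMap pr.g φ)).trans ((congrArg ψ h0).trans (map_zero ψ))
      · refine LinearMap.ext fun x => ?_
        obtain ⟨f, rfl⟩ := Submodule.mkQ_surjective _ x
        exact hf f

/-- The kernel of evaluation on `M`. Since `P₀* → P₁* → Tr M → 0` is a projective presentation,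
`Ext¹(Tr M, Λ)` consists of the `F ∈ P₀**` vanishing on `ker (P₀* → P₁*) = M*`, modulo `P₁**`. Such
an `F` is evaluation at some `x : P₀`, and it is sent to the image of `x` in `M`. -/
lemma exact_extOne_transpose :
    ∃ α : extGrp Λᵐᵒᵖ 1 (ModuleCat.of Λᵐᵒᵖ pr.Tr) (ModuleCat.of Λᵐᵒᵖ Λ) →+ M,
      Function.Injective α ∧ Set.range α = {x : M | evalL Λ M x = 0} := by
  let B : AddSubgroup ((pr.P₀ →ₗ[Λ] Λ) →ₗ[Λᵐᵒᵖ] Λ) :=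
    { carrier := {F | ∀ φ, dualMap pr.g φ = 0 → F φ = 0}
      zero_mem' := fun _ _ => rfl
      add_mem' := fun {F G} hF hG φ hφ => by
        rw [LinearMap.add_apply, hF φ hφ, hG φ hφ, add_zero]
      neg_mem' := fun {F} hF φ hφ => by rw [LinearMap.neg_apply, hF φ hφ, neg_zero] }
  obtain ⟨p, hp, hp0⟩ := exists_extOne_pres Λ (dualMap pr.g)
    (LinearMap.range (dualMap pr.g)).mkQ (Submodule.mkQ_surjective _) (Submodule.ker_mkQ _).symm B fun _ => Iff.rfl
  let ε := LinearEquiv.ofBijective _ (evalL_bijective (Λ := Λ) pr.P₀)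
  let q : B →+ M := (pr.π.comp ε.symm.toLinearMap).toAddMonoidHom.comp B.subtype
  have hq : ∀ x (hx : evalL Λ pr.P₀ x ∈ B), q ⟨_, hx⟩ = pr.π x := fun x _ =>
    congrArg pr.π (ε.symm_apply_apply x)
  have hB : ∀ b : B, ∃ x, ∃ hx : evalL Λ pr.P₀ x ∈ B, b = ⟨_, hx⟩ := by
    rintro ⟨F, hF⟩
    obtain ⟨x, rfl⟩ := (evalL_bijective (Λ := Λ) pr.P₀).2 F
    exact ⟨x, hF, rfl⟩
  obtain ⟨α, hα, hαp⟩ := exists_injective_desc p hp q fun b => by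
    obtain ⟨x, hx, rfl⟩ := hB b
    rw [hp0, hq]
    constructor
    · rintro ⟨H, hH⟩
      obtain ⟨y, rfl⟩ := (evalL_bijective (Λ := Λ) pr.P₁).2 H
      have : pr.g y = x := (evalL_bijective (Λ := Λ) pr.P₀).1 hH
      exact pr.exact.le ⟨y, this⟩
    · intro h
      obtain ⟨y, rfl⟩ := pr.exact.ge h
      exact ⟨evalL Λ pr.P₁ y, rfl⟩
  refine ⟨α, hα, Set.ext fun m => ⟨?_, fun hm => ?_⟩⟩
  · rintro ⟨z, rfl⟩
    obtain ⟨b, rfl⟩ := hp z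
    obtain ⟨x, hx, rfl⟩ := hB b
    rw [hαp, hq]
    exact LinearMap.ext fun φ => hx _ (dualEquivKer pr φ).2
  · obtain ⟨x, rfl⟩ := pr.surj m
    have hx : evalL Λ pr.P₀ x ∈ B := fun φ hφ => by
      obtain ⟨φ', h⟩ := (dualEquivKer pr).surjective ⟨φ, hφ⟩
      have h' : φ x = φ' (pr.π x) := by rw [← dualEquivKer_apply, h]
      exact h'.trans (LinearMap.congr_fun hm φ')
    exact ⟨p ⟨_, hx⟩, (hαp _).trans (hq x hx)⟩

/-- The cokernel of evaluation on `M`. By `dualEquivKer`, `Ext²(Tr M, Λ)` is the quotient of `M**` by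
the functionals on `M* ⊆ P₀*` that extend to `P₀*`; by reflexivity of `P₀` these are evaluations at
images of elements of `P₀`. -/
lemma exact_extTwo_transpose :
    ∃ β : ((M →ₗ[Λ] Λ) →ₗ[Λᵐᵒᵖ] Λ) →+
        extGrp Λᵐᵒᵖ 2 (ModuleCat.of Λᵐᵒᵖ pr.Tr) (ModuleCat.of Λᵐᵒᵖ Λ),
      Set.range (evalL Λ M) = {y | β y = 0} ∧ Function.Surjective β := by
  obtain ⟨p, hp, hp0⟩ := exists_extTwo_pres Λ (dualMap pr.g)
    (LinearMap.range (dualMap pr.g)).mkQ (Submodule.mkQ_surjective _) (Submodule.ker_mkQ _).symm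
  let κ := dualEquivKer pr
  let t : ((M →ₗ[Λ] Λ) →ₗ[Λᵐᵒᵖ] Λ) →+ (LinearMap.ker (dualMap pr.g) →ₗ[Λᵐᵒᵖ] Λ) :=
    { toFun := fun y => y.comp κ.symm.toLinearMap
      map_zero' := rfl
      map_add' := fun _ _ => rfl }
  have ht : ∀ y φ, t y (κ φ) = y φ := fun y φ => congrArg y (κ.symm_apply_apply φ)
  refine ⟨p.comp t, Set.ext fun y => ?_, hp.comp fun f =>
    ⟨f.comp κ.toLinearMap, LinearMap.ext fun ψ => congrArg f (κ.apply_symm_apply ψ)⟩⟩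
  refine Iff.trans ?_ (hp0 (t y)).symm
  constructor
  · rintro ⟨m, rfl⟩
    obtain ⟨x, rfl⟩ := pr.surj m
    refine ⟨evalL Λ pr.P₀ x, LinearMap.ext fun ψ => ?_⟩
    obtain ⟨φ, rfl⟩ := κ.surjective ψ
    exact (ht (evalL Λ M (pr.π x)) φ).symm
  · rintro ⟨H, hH⟩
    obtain ⟨x, rfl⟩ := (evalL_bijective (Λ := Λ) pr.P₀).2 H
    exact ⟨pr.π x, LinearMap.ext fun φ => (LinearMap.congr_fun hH (κ φ)).trans (ht y φ)⟩

/-- The kernel of evaluation on `Tr M`. An element of `Ext¹(M, Λ)` is represented by `f : P₁ → Λ`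
vanishing on `ker g`, and is sent to the class of `f` in `Tr M`. -/
lemma exact_extOne_module :
    ∃ α : extGrp Λ 1 (ModuleCat.of Λ M) (ModuleCat.of Λ Λ) →+ pr.Tr,
      Function.Injective α ∧ Set.range α = {x | evalR Λ pr.Tr x = 0} := by
  let B : AddSubgroup (pr.P₁ →ₗ[Λ] Λ) :=
    { carrier := {f | ∀ y, pr.g y = 0 → f y = 0}
      zero_mem' := fun _ _ => rfl
      add_mem' := fun {f f'} hf hf' y hy => by
        rw [LinearMap.add_apply, hf y hy, hf' y hy, add_zero]
      neg_mem' := fun {f} hf y hy => by rw [LinearMap.neg_apply, hf y hy, neg_zero] }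
  obtain ⟨p, hp, hp0⟩ := exists_extOne_pres Λ pr.g pr.π pr.surj pr.exact B fun _ => Iff.rfl
  let q : B →+ pr.Tr := (Submodule.mkQ _).toAddMonoidHom.comp B.subtype
  obtain ⟨α, hα, hαp⟩ := exists_injective_desc p hp q fun b =>

    (hp0 b).trans (Submodule.Quotient.mk_eq_zero (LinearMap.range (dualMap pr.g))).symm
  refine ⟨α, hα, Set.ext fun x => ⟨?_, fun hx => ?_⟩⟩
  · rintro ⟨z, rfl⟩
    obtain ⟨f, rfl⟩ := hp z
    rw [hαp]
    refine LinearMap.ext fun ψ => ?_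
    obtain ⟨y, rfl⟩ := (kerEquivDualTr pr).surjective ψ
    exact f.2 y.1 y.2
  · obtain ⟨f, rfl⟩ := Submodule.mkQ_surjective _ x
    exact ⟨p ⟨f, fun y hy => LinearMap.congr_fun hx (kerEquivDualTr pr ⟨y, hy⟩)⟩, hαp _⟩

/-- The cokernel of evaluation on `Tr M`. By `kerEquivDualTr`, `Ext²(M, Λ)` is the quotient of
`(Tr M)**` by the functionals on `ker g` that extend to `P₁`. -/
lemma exact_extTwo_module :
    ∃ β : ((pr.Tr →ₗ[Λᵐᵒᵖ] Λ) →ₗ[Λ] Λ) →+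
        extGrp Λ 2 (ModuleCat.of Λ M) (ModuleCat.of Λ Λ),
      Set.range (evalR Λ pr.Tr) = {y | β y = 0} ∧ Function.Surjective β := by
  obtain ⟨p, hp, hp0⟩ := exists_extTwo_pres Λ pr.g pr.π pr.surj pr.exact
  let τ := kerEquivDualTr pr
  let t : ((pr.Tr →ₗ[Λᵐᵒᵖ] Λ) →ₗ[Λ] Λ) →+ (LinearMap.ker pr.g →ₗ[Λ] Λ) :=
    { toFun := fun y => y.comp τ.toLinearMap
      map_zero' := rfl
      map_add' := fun _ _ => rfl }
  refine ⟨p.comp t, Set.ext fun Y => ?_, hp.comp fun f =>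
    ⟨f.comp τ.symm.toLinearMap, LinearMap.ext fun y => congrArg f (τ.symm_apply_apply y)⟩⟩
  refine Iff.trans ?_ (hp0 (t Y)).symm
  constructor
  · rintro ⟨x, rfl⟩
    obtain ⟨f, rfl⟩ := Submodule.mkQ_surjective _ x
    exact ⟨f, rfl⟩
  · rintro ⟨f, hf⟩
    refine ⟨Submodule.mkQ _ f, LinearMap.ext fun ψ => ?_⟩
    obtain ⟨y, rfl⟩ := τ.surjective ψ
    exact LinearMap.congr_fun hf y

end Transpose

end

/-- The two fundamental exact sequences relating `M`, its double dual and
`Ext^1`, `Ext^2` of the transpose (and dually). -/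
theorem stmt_2 (Λ : Type) [Ring Λ] [IsNoetherianRing Λ] [IsNoetherianRing Λᵐᵒᵖ]
    (M : Type) [AddCommGroup M] [Module Λ M] [Module.Finite Λ M]
    (pr : Presentation Λ M) :
    (∃ (α : extGrp Λᵐᵒᵖ 1 (ModuleCat.of Λᵐᵒᵖ pr.Tr) (ModuleCat.of Λᵐᵒᵖ Λ) →+ M)
       (β : ((M →ₗ[Λ] Λ) →ₗ[Λᵐᵒᵖ] Λ) →+
          extGrp Λᵐᵒᵖ 2 (ModuleCat.of Λᵐᵒᵖ pr.Tr) (ModuleCat.of Λᵐᵒᵖ Λ)),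
       Function.Injective α ∧ Set.range α = {x : M | evalL Λ M x = 0} ∧
       Set.range (evalL Λ M) = {y | β y = 0} ∧ Function.Surjective β) ∧
    (∃ (α' : extGrp Λ 1 (ModuleCat.of Λ M) (ModuleCat.of Λ Λ) →+ pr.Tr)
       (β' : ((pr.Tr →ₗ[Λᵐᵒᵖ] Λ) →ₗ[Λ] Λ) →+
          extGrp Λ 2 (ModuleCat.of Λ M) (ModuleCat.of Λ Λ)),
       Function.Injective α' ∧ Set.range α' = {x | evalR Λ pr.Tr x = 0} ∧
       Set.range (evalR Λ pr.Tr) = {y | β' y = 0} ∧ Function.Surjective β') := by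
  obtain ⟨α, hα, hα'⟩ := exact_extOne_transpose pr
  obtain ⟨β, hβ, hβ'⟩ := exact_extTwo_transpose pr
  obtain ⟨γ, hγ, hγ'⟩ := exact_extOne_module pr
  obtain ⟨δ, hδ, hδ'⟩ := exact_extTwo_module pr
  exact ⟨⟨α, β, hα, hα', hβ, hβ'⟩, ⟨γ, δ, hγ, hγ', hδ, hδ'⟩⟩
end

section
/- Let Λ be a left and right Noetherian ring. Each finitely generated right Λ-module is reflexive if and only if each finitely generated right Λ-module is torsionless, and both are equivalent to Λ being self-injective (i.e., Λ is injective as a left Λ-module and as a right Λ-module). -/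
/-!
The key notion is `ExtendsFG`: maps from finitely generated left ideals of `Λ` to `Λ` extend to
`Λ`, so that, by Baer's criterion, a left Noetherian `Λ` with this property is left self-injective.

*Left injectivity and right modules.* For a column `x` in `Λⁿ`, a column `y` lies in `xΛ` as soon
as every row killing `x` kills `y`, precisely when the right module `Λⁿ/xΛ` is torsionless; this
is also what is needed to extend the map `xᵢ ↦ yᵢ` from the left ideal `∑ Λxᵢ`. Hence torsionlessness of all
finitely generated right modules implies left self-injectivity. The same duality applied
to a finite presentation gives the converse, and injectivity of `Λ` applied to the dual
`N* → (Λⁿ)*` of a surjection `Λⁿ → N` lifts each element of `N**` to `(Λⁿ)** = Λⁿ`, which yields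
reflexivity.

*Right injectivity.* By the mirror image of the first argument it suffices that `Λ` is an injective
cogenerator for left modules, that is, that every simple left module embeds in `Λ`. Torsionlessness
of `Λ/I` says that each right ideal is the right annihilator of its left annihilator, so the
ascending chain condition on left ideals makes `Λ` right Artinian; let `J` be its radical, which is
nilpotent with semisimple quotient, and let `W` be the right annihilator of `J`, the left socle. It
suffices that the left annihilator of `W` is `J` (`ker_eq_of_leftAnn_socle`): for a maximal left
ideal `m` pick `e ∈ m` that is a right identity of `m` modulo `J`; then `m(1 - e) ⊆ J`, and
`(1 - e)w ≠ 0` for some `w ∈ W`, so `m` annihilates `(1 - e)w`.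
The equality is obtained without counting simple modules. For a two-sided ideal `I ⊇ J` let `X(I)`
be the set of `w ∈ W` with `wI = 0`, and let `ψ(I)` be the left annihilator of `X(I)`. Both steps
of `ψ` are reversible: `X(I)` is a right ideal, hence recovered from its left annihilator, and `I` is
the right annihilator of `X(I)` (`mem_of_socAnn`). So `ψ` is monotone and injective, the chain
`J ⊆ ψ(J) ⊆ ψ²(J) ⊆ ⋯` becomes stationary, and therefore `ψ(J) = J`.
-/

open CategoryTheory

/-! ### Extending maps from finitely generated ideals -/

/-- The condition that every map from a finitely generated left ideal of `R` to `R` is right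
multiplication by an element: `x` lists generators of the ideal, `y` their images, and the
hypothesis says that sending `x i` to `y i` is well defined. -/
def ExtendsFG (R : Type) [Ring R] : Prop :=
  ∀ (n : ℕ) (x y : Fin n → R),
    (∀ a : Fin n → R, ∑ i, a i * x i = 0 → ∑ i, a i * y i = 0) → ∃ b, ∀ i, y i = x i * b

lemma baer_of_extendsFG {R : Type} [Ring R] [IsNoetherianRing R] (h : ExtendsFG R) :
    Module.Baer R R := by
  intro I g
  obtain ⟨n, x, hx⟩ := Submodule.fg_iff_exists_fin_generating_family.mp
    (IsNoetherian.noetherian I)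
  have hxI : ∀ i, x i ∈ I := fun i => hx ▸ Submodule.subset_span ⟨i, rfl⟩
  have key : ∀ a : Fin n → R,
      g (∑ i, a i • (⟨x i, hxI i⟩ : I)) = ∑ i, a i * g ⟨x i, hxI i⟩ := by
    intro a; rw [map_sum]; exact Finset.sum_congr rfl fun i _ => by rw [map_smul, smul_eq_mul]
  obtain ⟨b, hb⟩ := h n x (fun i => g ⟨x i, hxI i⟩) (by
    intro a ha
    rw [← key]
    have : (∑ i, a i • (⟨x i, hxI i⟩ : I)) = 0 := by
      apply Subtype.ext
      simpa using ha
    rw [this, map_zero])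
  refine ⟨LinearMap.toSpanSingleton R R b, fun z hz => ?_⟩
  obtain ⟨a, ha⟩ := (Submodule.mem_span_range_iff_exists_fun R).mp (hx.symm ▸ hz)
  have hz' : (⟨z, hz⟩ : I) = ∑ i, a i • (⟨x i, hxI i⟩ : I) := by
    apply Subtype.ext
    simpa using ha.symm
  rw [hz', key, LinearMap.toSpanSingleton_apply, ← ha, smul_eq_mul, Finset.sum_mul]
  exact Finset.sum_congr rfl fun i _ => by rw [hb i, smul_eq_mul, mul_assoc]

section Core

open MulOpposite

variable {Λ : Type} [Ring Λ]

/-! ### Left self-injectivity and right modules -/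

/-- Every finitely generated right module is torsionless. -/
def RightTorsionless (Λ : Type) [Ring Λ] : Prop :=
  ∀ (N : Type) [AddCommGroup N] [Module Λᵐᵒᵖ N] [Module.Finite Λᵐᵒᵖ N],
    Function.Injective (evalR Λ N)

lemma right_apply_eq_sum {n : ℕ} (φ : (Fin n → Λ) →ₗ[Λᵐᵒᵖ] Λ) (v : Fin n → Λ) :
    φ v = ∑ i, φ (Pi.single i 1) * v i := by
  conv_lhs => rw [← Finset.univ_sum_single v]
  rw [map_sum]
  refine Finset.sum_congr rfl fun i _ => ?_
  have : (Pi.single i (v i) : Fin n → Λ) = op (v i) • Pi.single i 1 := by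
    rw [← Pi.single_smul]; simp
  rw [this, map_smul, op_smul_eq_mul]

lemma left_apply_eq_sum {n : ℕ} (φ : (Fin n → Λ) →ₗ[Λ] Λ) (v : Fin n → Λ) :
    φ v = ∑ i, v i * φ (Pi.single i 1) := by
  conv_lhs => rw [← Finset.univ_sum_single v]
  rw [map_sum]
  refine Finset.sum_congr rfl fun i _ => ?_
  have : (Pi.single i (v i) : Fin n → Λ) = v i • Pi.single i 1 := by
    rw [← Pi.single_smul]; simp
  rw [this, map_smul, smul_eq_mul]

instance finite_right : Module.Finite Λᵐᵒᵖ Λ :=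
  ⟨⟨{1}, by
    rw [eq_top_iff]
    intro x _
    rw [Finset.coe_singleton, Submodule.mem_span_singleton]
    exact ⟨op x, by simp⟩⟩⟩

lemma RightTorsionless.extendsFG (h : RightTorsionless Λ) : ExtendsFG Λ := by
  intro n x y hxy
  let K : Submodule Λᵐᵒᵖ (Fin n → Λ) := Submodule.span Λᵐᵒᵖ {x}
  have hy : K.mkQ y = 0 := by
    apply h ((Fin n → Λ) ⧸ K)
    rw [map_zero]
    ext f
    have hx : f (K.mkQ x) = 0 := by
      rw [show K.mkQ x = 0 from
        (Submodule.Quotient.mk_eq_zero K).mpr (Submodule.mem_span_singleton_self x), map_zero]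
    have e := right_apply_eq_sum (f ∘ₗ K.mkQ)
    have := hxy _ ((e x).symm.trans hx)
    exact (e y).trans this
  obtain ⟨b, hb⟩ := Submodule.mem_span_singleton.mp ((Submodule.Quotient.mk_eq_zero K).mp hy)
  exact ⟨b.unop, fun i => by rw [← hb]; rfl⟩

/-- Over a left self-injective, right Noetherian ring, finitely generated right modules are
torsionless. -/
lemma rightTorsionless_of_injective [IsNoetherianRing Λᵐᵒᵖ] (h : Module.Injective Λ Λ) :
    RightTorsionless Λ := by
  intro N _ _ _
  rw [injective_iff_map_eq_zero]
  intro z hz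
  obtain ⟨n, π, hπ⟩ : ∃ (n : ℕ) (π : (Fin n → Λ) →ₗ[Λᵐᵒᵖ] N), Function.Surjective π := by
    obtain ⟨n, f, hf⟩ := Module.Finite.exists_fin' Λᵐᵒᵖ N
    let u : (Fin n → Λ) →ₗ[Λᵐᵒᵖ] (Fin n → Λᵐᵒᵖ) :=
      { toFun := fun v i => op (v i), map_add' := fun _ _ => rfl, map_smul' := fun _ _ => rfl }
    exact ⟨n, f ∘ₗ u, hf.comp fun w => ⟨fun i => unop (w i), rfl⟩⟩
  obtain ⟨v, rfl⟩ := hπ z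
  have : IsNoetherian Λᵐᵒᵖ Λ := isNoetherian_of_isNoetherianRing_of_finite _ _
  obtain ⟨k, x, hx⟩ := Submodule.fg_iff_exists_fin_generating_family.mp
    (IsNoetherian.noetherian (LinearMap.ker π))
  -- `X` is the dual of the map `Λᵏ → Λⁿ` presenting `N`; its kernel is the dual of `N`.
  let X : (Fin n → Λ) →ₗ[Λ] (Fin k → Λ) :=
    { toFun := fun a j => ∑ i, a i * x j i
      map_add' := fun a b => by ext j; simp [add_mul, Finset.sum_add_distrib]
      map_smul' := fun a b => by ext j; simp [mul_assoc, Finset.mul_sum] }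
  let V : (Fin n → Λ) →ₗ[Λ] Λ :=
    { toFun := fun a => ∑ i, a i * v i
      map_add' := fun a b => by simp [add_mul, Finset.sum_add_distrib]
      map_smul' := fun a b => by simp [mul_assoc, Finset.mul_sum] }
  have hXV : LinearMap.ker X ≤ LinearMap.ker V := by
    intro a ha
    let φ : (Fin n → Λ) →ₗ[Λᵐᵒᵖ] Λ :=
      { toFun := fun w => ∑ i, a i * w i
        map_add' := fun a b => by simp [mul_add, Finset.sum_add_distrib]
        map_smul' := fun c b => by simp [Finset.sum_mul, mul_assoc] }
    have hφ : LinearMap.ker π ≤ LinearMap.ker φ := by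
      rw [← hx, Submodule.span_le]
      rintro _ ⟨j, rfl⟩
      exact congrFun (show X a = 0 from ha) j
    let ψ : N →ₗ[Λᵐᵒᵖ] Λ := (LinearMap.ker π).liftQ φ hφ ∘ₗ
      (π.quotKerEquivOfSurjective hπ).symm.toLinearMap
    have hψ : ψ (π v) = φ v := by
      have : (π.quotKerEquivOfSurjective hπ).symm (π v) = (LinearMap.ker π).mkQ v := by
        rw [LinearEquiv.symm_apply_eq]; rfl
      simp only [ψ, LinearMap.comp_apply, LinearEquiv.coe_coe, this]
      rfl
    exact hψ.symm.trans (LinearMap.congr_fun hz ψ)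
  obtain ⟨g, hg⟩ := h.out ((LinearMap.ker X).liftQ X le_rfl)
    (LinearMap.ker_eq_bot.mp (Submodule.ker_liftQ_eq_bot _ _ _ le_rfl))
    ((LinearMap.ker X).liftQ V hXV)
  have hg' : ∀ a, g (X a) = V a := fun a => hg ((LinearMap.ker X).mkQ a)
  have hv : v = ∑ j, op (g (Pi.single j 1)) • x j := by
    ext i
    have h1 : V (Pi.single i 1) = v i := by
      change ∑ l, (Pi.single i 1 : Fin n → Λ) l * v l = v i
      simp [Pi.single_apply]
    have h2 : ∀ j, X (Pi.single i 1) j = x j i := by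
      intro j
      change ∑ l, (Pi.single i 1 : Fin n → Λ) l * x j l = x j i
      simp [Pi.single_apply]
    rw [← h1, ← hg', left_apply_eq_sum g]
    simp [h2]
  have : v ∈ LinearMap.ker π := by
    rw [hv, ← hx]
    exact Submodule.sum_mem _ fun j _ => Submodule.smul_mem _ _ (Submodule.subset_span ⟨j, rfl⟩)
  exact this

/-- Over a left self-injective ring the evaluation map of a finitely generated right module is
surjective: it is covered by the evaluation map of a finite free module. -/
lemma evalR_surjective_of_injective (h : Module.Injective Λ Λ) (N : Type) [AddCommGroup N]
    [Module Λᵐᵒᵖ N] [Module.Finite Λᵐᵒᵖ N] : Function.Surjective (evalR Λ N) := by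
  intro ξ
  obtain ⟨n, π, hπ⟩ : ∃ (n : ℕ) (π : (Fin n → Λ) →ₗ[Λᵐᵒᵖ] N), Function.Surjective π := by
    obtain ⟨n, f, hf⟩ := Module.Finite.exists_fin' Λᵐᵒᵖ N
    let u : (Fin n → Λ) →ₗ[Λᵐᵒᵖ] (Fin n → Λᵐᵒᵖ) :=
      { toFun := fun v i => op (v i), map_add' := fun _ _ => rfl, map_smul' := fun _ _ => rfl }
    exact ⟨n, f ∘ₗ u, hf.comp fun w => ⟨fun i => unop (w i), rfl⟩⟩
  obtain ⟨g, hg⟩ := h.out (dualMapR π) (by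
    intro f f' hff
    ext z
    obtain ⟨v, rfl⟩ := hπ z
    exact LinearMap.congr_fun hff v) ξ
  -- `g` is evaluation at the vector of its values on the coordinate functionals.
  let p : Fin n → Λ := fun i => g (LinearMap.proj i)
  refine ⟨π p, ?_⟩
  ext f
  rw [← hg f]
  have hf : dualMapR π f = ∑ i, f (π (Pi.single i 1)) • (LinearMap.proj i :
      (Fin n → Λ) →ₗ[Λᵐᵒᵖ] Λ) := by
    refine LinearMap.ext fun v => ?_
    change f (π v) = _
    have := right_apply_eq_sum (f ∘ₗ π) v
    simp only [LinearMap.comp_apply] at this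
    rw [this]
    simp
  rw [hf, map_sum]
  have := right_apply_eq_sum (f ∘ₗ π) p
  simp only [LinearMap.comp_apply] at this
  change f (π p) = _
  rw [this]
  simp [p]

/-! ### Annihilators and the radical -/

/-- A torsionless cyclic module `Λ ⧸ I` forces the right ideal `I` to be the right annihilator of
its left annihilator. -/
lemma RightTorsionless.mem_of_annihilator (h : RightTorsionless Λ) (I : Submodule Λᵐᵒᵖ Λ) (x : Λ)
    (hx : ∀ a : Λ, (∀ y ∈ I, a * y = 0) → a * x = 0) : x ∈ I := by
  refine (Submodule.Quotient.mk_eq_zero I).mp (h (Λ ⧸ I) ?_)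
  rw [map_zero]
  refine LinearMap.ext fun f => ?_
  have key : ∀ y : Λ, f (I.mkQ y) = f (I.mkQ 1) * y := fun y => by
    have : I.mkQ y = op y • I.mkQ 1 := by rw [← map_smul]; simp
    rw [this, map_smul, op_smul_eq_mul]
  change f (I.mkQ x) = 0
  rw [key]
  refine hx _ fun y hy => ?_
  rw [← key, show I.mkQ y = 0 from (Submodule.Quotient.mk_eq_zero I).mpr hy, map_zero]

/-- The left annihilator of a subset. -/
def leftAnn (X : Set Λ) : Ideal Λ where
  carrier := {a | ∀ y ∈ X, a * y = 0}
  add_mem' ha hb y hy := by rw [add_mul, ha y hy, hb y hy, add_zero]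
  zero_mem' y _ := zero_mul y
  smul_mem' c a ha y hy := by rw [smul_eq_mul, mul_assoc, ha y hy, mul_zero]

lemma mem_leftAnn {X : Set Λ} {a : Λ} : a ∈ leftAnn X ↔ ∀ y ∈ X, a * y = 0 := Iff.rfl

/-- Taking left annihilators embeds the right ideals, order reversed, in the left ideals, so the
ascending chain condition on the left gives the descending one on the right. -/
lemma RightTorsionless.isArtinianRing [IsNoetherianRing Λ] (h : RightTorsionless Λ) :
    IsArtinianRing Λᵐᵒᵖ := by
  let F : Ideal Λᵐᵒᵖ → Ideal Λ := fun I => leftAnn {y | op y ∈ I}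
  have hF : ∀ I I' : Ideal Λᵐᵒᵖ, F I ≤ F I' → I' ≤ I := by
    intro I I' hle x hx
    let K : Submodule Λᵐᵒᵖ Λ :=
      { carrier := {y | op y ∈ I}
        add_mem' := fun ha hb => I.add_mem ha hb
        zero_mem' := I.zero_mem
        smul_mem' := fun c a ha => I.mul_mem_left c ha }
    exact h.mem_of_annihilator K x.unop fun a ha => mem_leftAnn.mp (hle ha) _ hx
  have hanti : StrictAnti F := by
    intro I I' hlt
    refine lt_of_le_not_ge (fun a ha y hy => ha y (hlt.le hy)) fun hge => ?_
    exact hlt.not_ge (hF _ _ hge)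
  refine ⟨Subrelation.wf (r := InvImage (· > ·) F) (fun {I I'} hlt => hanti hlt)
    (InvImage.wf F (IsWellFounded.wf (r := (· > · : Ideal Λ → Ideal Λ → Prop))))⟩

/-- If a power of `J` annihilates `z ≠ 0` from the right, then `z * R` contains a nonzero element
annihilated by `J`. -/
lemma exists_mul_ne_zero_of_pow {R : Type} [Ring R] (J : Ideal R) [J.IsTwoSided] (n : ℕ) :
    ∀ z : R, z ≠ 0 → (∀ j ∈ J ^ n, z * j = 0) → ∃ c, z * c ≠ 0 ∧ ∀ j ∈ J, z * c * j = 0 := by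
  induction n with
  | zero => intro z hz h; exact absurd (by simpa using h 1 (by rw [Submodule.pow_zero, Ideal.one_eq_top]; trivial)) hz
  | succ n ih =>
    intro z hz h
    by_cases hJ : ∀ j ∈ J, z * j = 0
    · exact ⟨1, by simpa using hz, by simpa using hJ⟩
    · push Not at hJ
      obtain ⟨j, hj, hzj⟩ := hJ
      obtain ⟨c, hc, hc'⟩ := ih (z * j) hzj fun i hi => by
        rw [mul_assoc]
        refine h _ ?_
        rw [Ideal.IsTwoSided.pow_succ]
        exact Ideal.mul_mem_mul hj hi
      exact ⟨j * c, by rwa [← mul_assoc], fun i hi => by rw [← mul_assoc z]; exact hc' i hi⟩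

/-- The consequences of `Λ` being right Artinian that are used: a surjection onto a semisimple
ring with nil kernel, such that every nonzero left ideal meets the elements killed from the left by
this kernel, that is, the left socle is essential. -/
lemma exists_semisimple_quotient [IsArtinianRing Λᵐᵒᵖ] :
    ∃ (D : Type) (_ : Ring D) (_ : IsSemisimpleRing D) (π : Λ →+* D), Function.Surjective π ∧
      (∀ j, π j = 0 → IsNilpotent j) ∧
      ∀ z : Λ, z ≠ 0 → ∃ c, c * z ≠ 0 ∧ ∀ j, π j = 0 → j * (c * z) = 0 := by
  let J := Ring.jacobson Λᵐᵒᵖ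
  have hss : IsSemisimpleRing (Λᵐᵒᵖ ⧸ J) := IsSemiprimaryRing.isSemisimpleRing
  refine ⟨(Λᵐᵒᵖ ⧸ J)ᵐᵒᵖ, inferInstance, inferInstance,
    (RingHom.op (Ideal.Quotient.mk J)).comp (RingEquiv.opOp Λ).toRingHom, ?_, ?_, ?_⟩
  · intro d
    obtain ⟨a, ha⟩ := Ideal.Quotient.mk_surjective d.unop
    exact ⟨a.unop, congrArg op ha⟩
  · intro j hj
    obtain ⟨n, hn⟩ := (IsSemiprimaryRing.isNilpotent : IsNilpotent (Ring.jacobson Λᵐᵒᵖ))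
    have hj' : op j ∈ J := Ideal.Quotient.eq_zero_iff_mem.mp (op_injective hj)
    have hjn := Ideal.pow_mem_pow hj' n
    exact ⟨n, op_injective (by simpa [J, hn] using hjn)⟩
  · intro z hz
    obtain ⟨n, hn⟩ := (IsSemiprimaryRing.isNilpotent : IsNilpotent (Ring.jacobson Λᵐᵒᵖ))
    obtain ⟨c, hc, hc'⟩ := exists_mul_ne_zero_of_pow J n (op z) (by simpa using hz) (by
      intro j hj
      have : j = 0 := by simpa [J, hn] using hj
      simp [this])
    refine ⟨c.unop, fun h0 => hc (unop_injective h0), fun j hj => ?_⟩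
    have hj' : op j ∈ J := Ideal.Quotient.eq_zero_iff_mem.mp (op_injective hj)
    exact op_injective (hc' _ hj')

/-- Modulo the kernel of a map to a semisimple ring, a left ideal is generated by an element of
itself acting as a right identity. -/
lemma exists_right_identity {D : Type} [Ring D] [IsSemisimpleRing D] (π : Λ →+* D)
    (hπ : Function.Surjective π) (m : Ideal Λ) :
    ∃ e ∈ m, ∀ y ∈ m, π (y - y * e) = 0 := by
  obtain ⟨e, he, hm⟩ := IsSemisimpleRing.ideal_eq_span_idempotent (m.map π)
  obtain ⟨e', he', rfl⟩ := (Ideal.mem_map_iff_of_surjective π hπ).mp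
    (hm ▸ Ideal.mem_span_singleton_self e)
  refine ⟨e', he', fun y hy => ?_⟩
  obtain ⟨a, ha⟩ := Ideal.mem_span_singleton'.mp (hm ▸ Ideal.mem_map_of_mem π hy)
  rw [map_sub, map_mul, ← ha, mul_assoc, he.eq, sub_self]

lemma exists_left_identity {D : Type} [Ring D] [IsSemisimpleRing D] (π : Λ →+* D)
    (hπ : Function.Surjective π) (m : Submodule Λᵐᵒᵖ Λ) :
    ∃ e ∈ m, ∀ y ∈ m, π (y - e * y) = 0 := by
  let m' : Ideal Λᵐᵒᵖ :=
    { carrier := {y | unop y ∈ m}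
      add_mem' := fun ha hb => m.add_mem ha hb
      zero_mem' := m.zero_mem
      smul_mem' := fun c a ha => m.smul_mem c ha }
  obtain ⟨e, he, h⟩ := exists_right_identity π.op
    (fun d => ⟨op (hπ d.unop).choose, congrArg op (hπ d.unop).choose_spec⟩) m'
  exact ⟨e.unop, he, fun y hy => op_injective (h (op y) hy)⟩

/-! ### The left annihilator of the left socle -/

section Socle

variable {D : Type} [Ring D] (π : Λ →+* D)

/-- The elements of the left socle `{w | ker π * w = 0}` that kill `I` from the left. -/
def socAnn (I : Ideal Λ) : Set Λ := {w | (∀ j, π j = 0 → j * w = 0) ∧ ∀ i ∈ I, w * i = 0}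

variable [IsSemisimpleRing D]

/-- A two-sided ideal `I` containing the radical is the right annihilator of `socAnn π I`. If `R'`
denotes that annihilator and `e ∈ R'` is a left identity of `R'` modulo the radical, then right
multiplication by `1 - e` is injective on the left annihilator `L` of `I`, since it is so on the
essential submodule `socAnn π I`; by injectivity of `Λ` it has a one-sided inverse given by right
multiplication by some `b`, so that `(1 - e) * b - 1 ∈ I` and `e ∈ I`. -/
lemma mem_of_socAnn (h : RightTorsionless Λ) (hinj : Module.Injective Λ Λ)
    (hπ : Function.Surjective π)
    (hess : ∀ z : Λ, z ≠ 0 → ∃ c, c * z ≠ 0 ∧ ∀ j, π j = 0 → j * (c * z) = 0)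
    (I : Ideal Λ) (hI : I.IsTwoSided) (hJI : ∀ j, π j = 0 → j ∈ I) (x : Λ)
    (hx : ∀ w ∈ socAnn π I, w * x = 0) : x ∈ I := by
  let R' : Submodule Λᵐᵒᵖ Λ :=
    { carrier := {a | ∀ w ∈ socAnn π I, w * a = 0}
      add_mem' := fun ha hb w hw => by rw [mul_add, ha w hw, hb w hw, add_zero]
      zero_mem' := fun w _ => mul_zero w
      smul_mem' := fun c a ha w hw => by
        change w * (a * c.unop) = 0
        rw [← mul_assoc, ha w hw, zero_mul] }
  obtain ⟨e, he, hey⟩ := exists_left_identity π hπ R'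
  let L : Ideal Λ := leftAnn (I : Set Λ)
  let g : L →ₗ[Λ] Λ := LinearMap.toSpanSingleton Λ Λ (1 - e) ∘ₗ L.subtype
  have hg : ∀ y : L, g y = (y : Λ) * (1 - e) := fun y => rfl
  have hginj : Function.Injective g := by
    rw [injective_iff_map_eq_zero]
    rintro ⟨y, hy⟩ hy0
    by_contra hne
    have hye : y * e = y := by
      rw [hg, mul_sub, mul_one, sub_eq_zero] at hy0
      exact hy0.symm
    obtain ⟨c, hc, hcj⟩ := hess y fun h0 => hne (Subtype.ext h0)
    have hmem : c * y ∈ socAnn π I :=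
      ⟨hcj, fun i hi => by rw [mul_assoc, mem_leftAnn.mp hy i hi, mul_zero]⟩
    have : c * y * e = 0 := he _ hmem
    exact hc (by rwa [mul_assoc, hye] at this)
  obtain ⟨b, hb⟩ := hinj.out g hginj L.subtype
  have hb1 : ∀ y ∈ L, y * ((1 - e) * b 1) = y := by
    intro y hy
    have h1 := hb ⟨y, hy⟩
    rw [hg] at h1
    have h2 : b (y * (1 - e)) = y * (1 - e) * b 1 := by
      conv_lhs => rw [← mul_one (y * (1 - e)), ← smul_eq_mul, map_smul, smul_eq_mul]
    rw [← mul_assoc, ← h2]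
    exact h1
  have hmem : (1 - e) * b 1 - 1 ∈ I := by
    let I' : Submodule Λᵐᵒᵖ Λ :=
      { carrier := I
        add_mem' := fun ha hb => I.add_mem ha hb
        zero_mem' := I.zero_mem
        smul_mem' := fun c a ha => I.mul_mem_right c.unop ha }
    refine h.mem_of_annihilator I' _ fun a ha => ?_
    rw [mul_sub, hb1 a ha, mul_one, sub_self]
  have hee : e - e * e ∈ I := hJI _ (hey e he)
  have heI : e ∈ I := by
    have h1 : (e - e * e) * b 1 ∈ I := I.mul_mem_right _ hee
    have h2 : e * ((1 - e) * b 1 - 1) ∈ I := I.mul_mem_left e hmem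
    have : e = (e - e * e) * b 1 - e * ((1 - e) * b 1 - 1) := by noncomm_ring
    rw [this]
    exact I.sub_mem h1 h2
  have hxe : x - e * x ∈ I := hJI _ (hey x hx)
  have := I.add_mem hxe (I.mul_mem_right x heI)
  rwa [sub_add_cancel] at this

/-- The left socle has left annihilator exactly the radical. The operation
`I ↦ leftAnn (socAnn π I)` on the two-sided ideals containing the radical is monotone and
injective, so its iterates starting from the radical form an ascending chain that can only become
stationary if it is constant. -/
lemma ker_eq_of_leftAnn_socle [IsNoetherianRing Λ] (h : RightTorsionless Λ)
    (hinj : Module.Injective Λ Λ) (hπ : Function.Surjective π)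
    (hess : ∀ z : Λ, z ≠ 0 → ∃ c, c * z ≠ 0 ∧ ∀ j, π j = 0 → j * (c * z) = 0)
    (x : Λ) (hx : ∀ w, (∀ j, π j = 0 → j * w = 0) → x * w = 0) : π x = 0 := by
  let ψ : Ideal Λ → Ideal Λ := fun I => leftAnn (socAnn π I)
  have hψ2 : ∀ I, (ψ I).IsTwoSided := fun I => ⟨fun {u} c hu w hw => by
    rw [mul_assoc]
    refine hu _ ⟨fun j hj => ?_, fun i hi => by rw [mul_assoc, hw.2 i hi, mul_zero]⟩
    rw [← mul_assoc]
    exact hw.1 _ (by rw [map_mul, hj, zero_mul])⟩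
  have hψJ : ∀ I j, π j = 0 → j ∈ ψ I := fun I j hj w hw => hw.1 j hj
  have hψmono : Monotone ψ := fun I I' hII u hu w hw => hu w ⟨hw.1, fun i hi => hw.2 i (hII hi)⟩
  have hsub : ∀ I I' : Ideal Λ, ψ I ≤ ψ I' → socAnn π I' ⊆ socAnn π I := by
    intro I I' hle w hw
    let K : Submodule Λᵐᵒᵖ Λ :=
      { carrier := socAnn π I
        add_mem' := fun ha hb => ⟨fun j hj => by rw [mul_add, ha.1 j hj, hb.1 j hj, add_zero],
          fun i hi => by rw [add_mul, ha.2 i hi, hb.2 i hi, add_zero]⟩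
        zero_mem' := ⟨fun j _ => mul_zero j, fun i _ => zero_mul i⟩
        smul_mem' := fun c a ha => ⟨fun j hj => by
            change j * (a * c.unop) = 0
            rw [← mul_assoc, ha.1 j hj, zero_mul],
          fun i hi => by
            change a * c.unop * i = 0
            rw [mul_assoc]
            exact ha.2 _ (I.mul_mem_left _ hi)⟩ }
    exact h.mem_of_annihilator K w fun a ha => hle ha w hw
  have hψle : ∀ I I' : Ideal Λ, I'.IsTwoSided → (∀ j, π j = 0 → j ∈ I') →
      ψ I ≤ ψ I' → I ≤ I' := fun I I' h2 hJ hle x hx =>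
    mem_of_socAnn π h hinj hπ hess I' h2 hJ x fun w hw => (hsub I I' hle hw).2 x hx
  let a : ℕ → Ideal Λ := fun n => ψ^[n] (RingHom.ker π)
  have ha1 : ∀ n, a (n + 1) = ψ (a n) := fun n => Function.iterate_succ_apply' ψ n _
  have hmono : Monotone a :=
    hψmono.monotone_iterate_of_le_map fun j hj => hψJ _ j ((RingHom.mem_ker).mp hj)
  have ha2 : ∀ n, (a n).IsTwoSided := by
    rintro (_ | n)
    · exact inferInstanceAs (RingHom.ker π).IsTwoSided
    · rw [ha1]; exact hψ2 _
  have hdesc : ∀ n, a (n + 1) ≤ a n → a 1 ≤ a 0 := by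
    intro n
    induction n with
    | zero => exact id
    | succ n ih =>
      intro hle
      refine ih (hψle _ _ (ha2 n) (fun j hj => hmono (Nat.zero_le n) hj) ?_)
      rwa [← ha1, ← ha1]
  obtain ⟨n, hn⟩ := monotone_stabilizes_iff_noetherian.mpr
    (inferInstanceAs (IsNoetherian Λ Λ)) ⟨a, hmono⟩
  have h10 : a 1 ≤ a 0 := hdesc n (hn (n + 1) n.le_succ).ge
  exact h10 (show x ∈ ψ (RingHom.ker π) from fun w hw => hx w hw.1)

end Socle

/-! ### Right self-injectivity -/

/-- Every simple left module embeds in `Λ`. -/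
lemma exists_ne_zero_of_isMaximal [IsNoetherianRing Λ] (h : RightTorsionless Λ)
    (hinj : Module.Injective Λ Λ) (m : Ideal Λ) (hm : m.IsMaximal) :
    ∃ c : Λ, c ≠ 0 ∧ ∀ y ∈ m, y * c = 0 := by
  have := h.isArtinianRing
  obtain ⟨D, _, _, π, hπ, hnil, hess⟩ := exists_semisimple_quotient (Λ := Λ)
  obtain ⟨e, he, hey⟩ := exists_right_identity π hπ m
  by_cases h1 : π (1 - e) = 0
  · -- Then `e = 1 - (1 - e)` would be a unit in the proper ideal `m`.
    have hu := (hnil _ h1).isUnit_one_sub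
    rw [sub_sub_cancel] at hu
    exact absurd (Ideal.eq_top_of_isUnit_mem m he hu) hm.ne_top
  · by_contra! hcon
    refine h1 (ker_eq_of_leftAnn_socle π h hinj hπ hess _ fun w hw => ?_)
    by_contra hne
    obtain ⟨y, hy, hyc⟩ := hcon _ hne
    refine hyc ?_
    rw [← mul_assoc, mul_sub, mul_one]
    exact hw _ (hey y hy)

/-- Over a left self-injective ring into which every simple left module embeds, every left module
is separated by its functionals. -/
lemma exists_functional_ne_zero (hinj : Module.Injective Λ Λ)
    (hk : ∀ m : Ideal Λ, m.IsMaximal → ∃ c : Λ, c ≠ 0 ∧ ∀ y ∈ m, y * c = 0)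
    {M : Type} [AddCommGroup M] [Module Λ M] (v : M) (hv : v ≠ 0) :
    ∃ φ : M →ₗ[Λ] Λ, φ v ≠ 0 := by
  let s := LinearMap.toSpanSingleton Λ M v
  have hs : LinearMap.ker s ≠ ⊤ := by
    intro htop
    have : (1 : Λ) ∈ LinearMap.ker s := htop ▸ Submodule.mem_top
    exact hv (by simpa [s] using this)
  obtain ⟨m, hm, hle⟩ := Ideal.exists_le_maximal _ hs
  obtain ⟨c, hc, hmc⟩ := hk m hm
  obtain ⟨φ, hφ⟩ := hinj.out ((LinearMap.ker s).liftQ s le_rfl)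
    (LinearMap.ker_eq_bot.mp (Submodule.ker_liftQ_eq_bot _ _ _ le_rfl))
    ((LinearMap.ker s).liftQ (LinearMap.toSpanSingleton Λ Λ c) fun y hy => hmc y (hle hy))
  refine ⟨φ, fun h0 => hc ?_⟩
  have := hφ ((LinearMap.ker s).mkQ 1)
  have h1 : φ (s 1) = (1 : Λ) • c := this
  simpa [s, h0] using h1.symm

/-- The left-handed counterpart of `RightTorsionless.extendsFG`. -/
lemma extendsFG_op
    (hf : ∀ (M : Type) [AddCommGroup M] [Module Λ M] (v : M), v ≠ 0 → ∃ φ : M →ₗ[Λ] Λ, φ v ≠ 0) :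
    ExtendsFG Λᵐᵒᵖ := by
  intro n x y hxy
  let K : Submodule Λ (Fin n → Λ) := Submodule.span Λ {fun i => unop (x i)}
  have hy : K.mkQ (fun i => unop (y i)) = 0 := by
    by_contra hne
    obtain ⟨f, hfy⟩ := hf _ _ hne
    refine hfy ?_
    have hx : f (K.mkQ fun i => unop (x i)) = 0 := by
      rw [show K.mkQ (fun i => unop (x i)) = 0 from
        (Submodule.Quotient.mk_eq_zero K).mpr (Submodule.mem_span_singleton_self _), map_zero]
    have e := left_apply_eq_sum (f ∘ₗ K.mkQ)
    have := hxy (fun i => op ((f ∘ₗ K.mkQ) (Pi.single i 1))) (unop_injective (by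
      simpa using (e _).symm.trans hx))
    exact (e _).trans (by simpa using congrArg unop this)
  obtain ⟨b, hb⟩ := Submodule.mem_span_singleton.mp ((Submodule.Quotient.mk_eq_zero K).mp hy)
  exact ⟨op b, fun i => unop_injective (congrFun hb i).symm⟩

lemma injective_of_rightTorsionless [IsNoetherianRing Λ] [IsNoetherianRing Λᵐᵒᵖ]
    (h : RightTorsionless Λ) : Module.Injective Λ Λ ∧ Module.Injective Λᵐᵒᵖ Λ := by
  have hinj : Module.Injective Λ Λ := (baer_of_extendsFG h.extendsFG).injective
  refine ⟨hinj, ?_⟩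
  have hop : ExtendsFG Λᵐᵒᵖ := extendsFG_op fun M _ _ v hv =>
    exists_functional_ne_zero hinj (exists_ne_zero_of_isMaximal h hinj) v hv
  let u : Λᵐᵒᵖ ≃ₗ[Λᵐᵒᵖ] Λ :=
    { toFun := unop, invFun := op, map_add' := fun _ _ => rfl, map_smul' := fun _ _ => rfl
      left_inv := fun _ => rfl, right_inv := fun _ => rfl }
  exact ((baer_of_extendsFG hop).of_equiv u).injective

end Core

/-- Every f.g. right module is reflexive iff every f.g. right module is torsionless,
and both are equivalent to `Λ` being self-injective. -/
theorem stmt_3 (Λ : Type) [Ring Λ] [IsNoetherianRing Λ] [IsNoetherianRing Λᵐᵒᵖ] :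
    ((∀ (N : Type) [AddCommGroup N] [Module Λᵐᵒᵖ N] [Module.Finite Λᵐᵒᵖ N],
        Function.Bijective (evalR Λ N)) ↔
      (∀ (N : Type) [AddCommGroup N] [Module Λᵐᵒᵖ N] [Module.Finite Λᵐᵒᵖ N],
        Function.Injective (evalR Λ N))) ∧
    ((∀ (N : Type) [AddCommGroup N] [Module Λᵐᵒᵖ N] [Module.Finite Λᵐᵒᵖ N],
        Function.Injective (evalR Λ N)) ↔
      (Module.Injective Λ Λ ∧ Module.Injective Λᵐᵒᵖ Λ)) := by
  refine ⟨⟨fun h N _ _ _ => (h N).1, fun h N _ _ _ => ⟨h N, ?_⟩⟩,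
    injective_of_rightTorsionless, fun h => rightTorsionless_of_injective h.1⟩
  exact evalR_surjective_of_injective (injective_of_rightTorsionless h).1 N
end

section
/- Let Λ be a left and right Noetherian ring with fin.dim Λ = 0 (every finitely generated left Λ-module of finite projective dimension is projective). Then any finitely generated right Λ-module N with N* = Hom_{Λ^op}(N, Λ) projective is itself projective. -/
/-! Take a presentation `F₁ → F₀ → N → 0` by finite free right modules, with first map `f`. Dualizing
gives an exact sequence of left modules `0 → N* → F₀* → F₁* → T → 0`, whose middle map is `f*` and
where `T` is the transpose of `N`. Since `N*` is projective, `range f* ≅ F₀* / N*` has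
projective dimension at most one, so it is projective because `fin.dim Λ = 0`. The same argument applied to `0 → range f* → F₁* → T → 0` shows
that `T` is projective (`projective_quotient_of_findim_zero` in both cases).

Hence `f*` has a generalized inverse `v`, that is `f* v f* = f*` (`exists_comp_comp_eq_self`).
Dualization is full and faithful on finite free modules (`exists_dualMapR_eq` gives fullness), so
`v = k*` with `f k f = f`. Then `1 - f k` vanishes on `range f` and induces a section of `F₀ → N`,
and `N` is a direct summand of `F₀`.
-/

open CategoryTheory

/-- Projective dimension at most one, in Mathlib's sense (Ext computed in the derived category),
implies the same bound for `pdLE`: both kinds of Ext are cohomology of the complex of maps out of a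
projective resolution, so a vanishing class says that every cocycle is a coboundary. -/
lemma pdLE_one_of_hasProjectiveDimensionLT {Λ : Type} [Ring Λ] (M : ModuleCat.{0} Λ)
    [HasProjectiveDimensionLT M 2] : pdLE Λ M 1 := by
  intro N
  let P := projectiveResolution M
  suffices h : Limits.IsZero (extGrp Λ 2 M N) from
    ModuleCat.subsingleton_of_isZero h
  refine Limits.IsZero.of_iso ?_ (P.isoExt (R := ℤ) 2 N)
  rw [← HomologicalComplex.exactAt_iff_isZero_homology,
    HomologicalComplex.exactAt_iff' _ 1 2 3 (by simp) (by simp),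
    ShortComplex.moduleCat_exact_iff]
  intro (x : P.complex.X 2 ⟶ N) (hx : P.complex.d 3 2 ≫ x = 0)
  have h0 : P.extMk x 3 rfl hx = 0 :=
    Abelian.Ext.eq_zero_of_hasProjectiveDimensionLT _ 2 le_rfl
  obtain ⟨g, hg⟩ := (P.extMk_eq_zero_iff x 3 rfl hx 1 rfl).1 h0
  exact ⟨g, hg⟩

/-- When `fin.dim Λ = 0`, the quotient of a finitely generated projective module by a projective
submodule is projective, because its projective dimension is at most one. -/
lemma projective_quotient_of_findim_zero {Λ : Type} [Ring Λ]
    (hfin : ∀ (M : Type) [AddCommGroup M] [Module Λ M] [Module.Finite Λ M],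
      (∃ n, pdLE Λ (ModuleCat.of Λ M) n) → Module.Projective Λ M)
    {F : Type} [AddCommGroup F] [Module Λ F] [Module.Finite Λ F] [Module.Projective Λ F]
    (S : Submodule Λ F) [Module.Projective Λ S] : Module.Projective Λ (F ⧸ S) := by
  refine hfin (F ⧸ S) ⟨1, ?_⟩
  let C : ShortComplex (ModuleCat.{0} Λ) :=
    ShortComplex.mk (ModuleCat.ofHom S.subtype) (ModuleCat.ofHom S.mkQ) (by ext x; simp)
  have hC : C.ShortExact :=
    { exact := by
        rw [ShortComplex.moduleCat_exact_iff_range_eq_ker]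
        simp [C]
      mono_f := (ModuleCat.mono_iff_injective _).2 S.injective_subtype
      epi_g := (ModuleCat.epi_iff_surjective _).2 S.mkQ_surjective }
  have h₁ : Projective C.X₁ := IsProjective.iff_projective (R := Λ) S |>.1 inferInstance
  have h₂ : Projective C.X₂ := IsProjective.iff_projective (R := Λ) F |>.1 inferInstance
  have : HasProjectiveDimensionLT (ModuleCat.of Λ (F ⧸ S)) 2 :=
    (hC.hasProjectiveDimensionLT_X₃_iff 0 h₂).2 inferInstance
  exact pdLE_one_of_hasProjectiveDimensionLT _

/-- A ring is free of rank one as a right module over itself. -/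
def rightSelfEquiv (Λ : Type) [Ring Λ] : Λᵐᵒᵖ ≃ₗ[Λᵐᵒᵖ] Λ where
  toFun := MulOpposite.unop
  invFun := MulOpposite.op
  map_add' _ _ := rfl
  map_smul' _ _ := rfl
  left_inv _ := rfl
  right_inv _ := rfl

/-- The coordinate functionals identify `(Λⁿ)*`, for the free right module `Λⁿ`, with the free left
module `Λⁿ`. -/
def rightFreeDualEquiv (Λ : Type) [Ring Λ] (n : ℕ) :
    ((Fin n → Λ) →ₗ[Λᵐᵒᵖ] Λ) ≃ₗ[Λ] (Fin n → Λ) where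
  toFun φ i := φ (Pi.single i 1)
  invFun a :=
    { toFun := fun x => ∑ i, a i * x i
      map_add' := fun x y => by simp [mul_add, Finset.sum_add_distrib]
      map_smul' := fun c x => by simp [Finset.sum_mul, mul_assoc] }
  map_add' _ _ := rfl
  map_smul' _ _ := rfl
  left_inv φ := by
    refine LinearMap.ext fun x => ?_
    change ∑ i, φ (Pi.single i 1) * x i = φ x
    have hx : x = ∑ i, MulOpposite.op (x i) • (Pi.single i (1 : Λ) : Fin n → Λ) := by
      ext j
      simp [Finset.sum_apply, Pi.single_apply]
    conv_rhs => rw [hx, map_sum]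
    simp
  right_inv a := by
    ext i
    simp [Pi.single_apply]

/-- Every functional on the free right module `Λⁿ` is evaluated coordinatewise. -/
lemma rightFree_apply {Λ : Type} [Ring Λ] {n : ℕ} (φ : (Fin n → Λ) →ₗ[Λᵐᵒᵖ] Λ) (x : Fin n → Λ) :
    φ x = ∑ i, φ (Pi.single i 1) * x i :=
  (LinearMap.congr_fun ((rightFreeDualEquiv Λ n).left_inv φ) x).symm

/-- Dualization is full on finite free right modules: every left linear map
`(Λⁿ)* → (Λᵐ)*` is the dual of a right linear map `Λᵐ → Λⁿ`. -/
lemma exists_dualMapR_eq {Λ : Type} [Ring Λ] {m n : ℕ}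
    (h : ((Fin n → Λ) →ₗ[Λᵐᵒᵖ] Λ) →ₗ[Λ] ((Fin m → Λ) →ₗ[Λᵐᵒᵖ] Λ)) :
    ∃ k : (Fin m → Λ) →ₗ[Λᵐᵒᵖ] (Fin n → Λ), dualMapR k = h := by
  refine ⟨LinearMap.pi fun j => h (LinearMap.proj j), ?_⟩
  ext1 φ
  have hφ : φ = ∑ j, φ (Pi.single j 1) • (LinearMap.proj j : (Fin n → Λ) →ₗ[Λᵐᵒᵖ] Λ) := by
    refine LinearMap.ext fun x => ?_
    rw [rightFree_apply]
    simp [LinearMap.sum_apply]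
  conv_rhs => rw [hφ]
  refine LinearMap.ext fun x => ?_
  simp only [map_sum, map_smul, LinearMap.sum_apply, LinearMap.smul_apply, smul_eq_mul]
  exact rightFree_apply φ _

/-- A linear map whose cokernel and whose range are projective has a generalized inverse: both the
surjection onto the range and the inclusion of the range split. -/
lemma exists_comp_comp_eq_self {R A B : Type} [Ring R] [AddCommGroup A] [Module R A]
    [AddCommGroup B] [Module R B] (u : A →ₗ[R] B) [Module.Projective R (LinearMap.range u)]
    [Module.Projective R (B ⧸ LinearMap.range u)] : ∃ v : B →ₗ[R] A, u ∘ₗ v ∘ₗ u = u := by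
  obtain ⟨s, hs⟩ := Module.projective_lifting_property u.rangeRestrict LinearMap.id
    u.surjective_rangeRestrict
  obtain ⟨t, ht⟩ := Module.projective_lifting_property (LinearMap.range u).mkQ LinearMap.id
    (LinearMap.range u).mkQ_surjective
  -- `1 - t ∘ mkQ` is a projection of `B` onto the range of `u`.
  let p : B →ₗ[R] LinearMap.range u :=
    (LinearMap.id - t ∘ₗ (LinearMap.range u).mkQ).codRestrict (LinearMap.range u) fun b => by
      rw [← (Submodule.Quotient.mk_eq_zero (LinearMap.range u))]
      have := LinearMap.congr_fun ht ((LinearMap.range u).mkQ b)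
      simp at this
      simp [this]
  refine ⟨s ∘ₗ p, ?_⟩
  ext a
  have hp : p (u a) = u.rangeRestrict a := by
    ext
    have h0 : (LinearMap.range u).mkQ (u a) = 0 := by simp
    simp only [p, LinearMap.codRestrict_apply, LinearMap.sub_apply, LinearMap.comp_apply, h0]
    simp
  have h1 := congrArg Subtype.val (LinearMap.congr_fun hs (u.rangeRestrict a))
  simpa [hp] using h1

/-- If `fin.dim Λ = 0` then a f.g. right module with projective dual is projective. -/
theorem stmt_4 (Λ : Type) [Ring Λ] [IsNoetherianRing Λ] [IsNoetherianRing Λᵐᵒᵖ]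
    (hfin : ∀ (M : Type) [AddCommGroup M] [Module Λ M] [Module.Finite Λ M],
      (∃ n, pdLE Λ (ModuleCat.of Λ M) n) → Module.Projective Λ M)
    (N : Type) [AddCommGroup N] [Module Λᵐᵒᵖ N] [Module.Finite Λᵐᵒᵖ N]
    (hN : Module.Projective Λ (N →ₗ[Λᵐᵒᵖ] Λ)) :
    Module.Projective Λᵐᵒᵖ N := by
  have cover : ∀ (X : Type) [AddCommGroup X] [Module Λᵐᵒᵖ X] [Module.Finite Λᵐᵒᵖ X],
      ∃ (n : ℕ) (q : (Fin n → Λ) →ₗ[Λᵐᵒᵖ] X), Function.Surjective q := by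
    intro X _ _ _
    obtain ⟨n, q, hq⟩ := Module.Finite.exists_fin' Λᵐᵒᵖ X
    let e := LinearEquiv.piCongrRight fun _ : Fin n => (rightSelfEquiv Λ).symm
    exact ⟨n, q ∘ₗ e.toLinearMap, hq.comp e.surjective⟩
  obtain ⟨m, q, hq⟩ := cover N
  have : Module.Finite Λᵐᵒᵖ (Fin m → Λ) :=
    Module.Finite.equiv (LinearEquiv.piCongrRight fun _ : Fin m => rightSelfEquiv Λ)
  have : Module.Projective Λᵐᵒᵖ (Fin m → Λ) :=
    Module.Projective.of_equiv (LinearEquiv.piCongrRight fun _ : Fin m => rightSelfEquiv Λ)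
  obtain ⟨n, r, hr⟩ := cover (LinearMap.ker q)
  let f : (Fin n → Λ) →ₗ[Λᵐᵒᵖ] (Fin m → Λ) := (LinearMap.ker q).subtype ∘ₗ r
  have hf : LinearMap.range f = LinearMap.ker q := by
    rw [LinearMap.range_comp_of_range_eq_top _ (LinearMap.range_eq_top.2 hr),
      Submodule.range_subtype]
  have hfree : ∀ k, Module.Finite Λ ((Fin k → Λ) →ₗ[Λᵐᵒᵖ] Λ) ∧
      Module.Projective Λ ((Fin k → Λ) →ₗ[Λᵐᵒᵖ] Λ) := fun k =>
    ⟨Module.Finite.equiv (rightFreeDualEquiv Λ k).symm,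
      Module.Projective.of_equiv (rightFreeDualEquiv Λ k).symm⟩
  have := (hfree m).1
  have := (hfree m).2
  have := (hfree n).1
  have := (hfree n).2
  -- Left exactness of the dual: `N*` is the kernel of `f*`.
  have hker : LinearMap.ker (dualMapR f) = LinearMap.range (dualMapR (Λ := Λ) q) := by
    ext φ
    constructor
    · intro hφ
      have hle : LinearMap.ker q ≤ LinearMap.ker φ := by
        rw [← hf]
        rintro _ ⟨x, rfl⟩
        exact LinearMap.congr_fun hφ x
      refine ⟨(LinearMap.ker q).liftQ φ hle ∘ₗ (q.quotKerEquivOfSurjective hq).symm.toLinearMap, ?_⟩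
      refine LinearMap.ext fun x => ?_
      change (LinearMap.ker q).liftQ φ hle ((q.quotKerEquivOfSurjective hq).symm (q x)) = φ x
      have : (q.quotKerEquivOfSurjective hq).symm (q x) = (LinearMap.ker q).mkQ x := by
        rw [LinearEquiv.symm_apply_eq]; rfl
      rw [this]; simp
    · rintro ⟨ψ, rfl⟩
      refine LinearMap.ext fun x => ?_
      have : f x ∈ LinearMap.ker q := hf ▸ LinearMap.mem_range_self f x
      change ψ (q (f x)) = 0
      rw [LinearMap.mem_ker.1 this, map_zero]
  have hinj : Function.Injective (dualMapR (Λ := Λ) q) := fun φ ψ h =>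
    (LinearMap.cancel_right hq).1 h
  have : Module.Projective Λ (LinearMap.ker (dualMapR f)) := by
    rw [hker]
    exact Module.Projective.of_equiv (LinearEquiv.ofInjective _ hinj)
  have := projective_quotient_of_findim_zero hfin (LinearMap.ker (dualMapR f))
  have : Module.Projective Λ (LinearMap.range (dualMapR f)) :=
    Module.Projective.of_equiv (dualMapR f).quotKerEquivRange
  have := projective_quotient_of_findim_zero hfin (LinearMap.range (dualMapR f))
  obtain ⟨v, hv⟩ := exists_comp_comp_eq_self (dualMapR f)
  obtain ⟨k, rfl⟩ := exists_dualMapR_eq v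
  -- The coordinate functionals separate points, so the identity `f* k* f* = f*` descends.
  have hk : ∀ x, f (k (f x)) = f x := fun x => by
    ext j
    exact LinearMap.congr_fun (LinearMap.congr_fun hv (LinearMap.proj j)) x
  -- `1 - f ∘ k` kills `range f = ker q`, so it induces a section of `q`.
  have hle : LinearMap.ker q ≤ LinearMap.ker (LinearMap.id - f ∘ₗ k) := by
    rw [← hf]
    rintro _ ⟨x, rfl⟩
    simp [hk]
  let s : N →ₗ[Λᵐᵒᵖ] (Fin m → Λ) :=
    (LinearMap.ker q).liftQ (LinearMap.id - f ∘ₗ k) hle ∘ₗ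
      (q.quotKerEquivOfSurjective hq).symm.toLinearMap
  refine Module.Projective.of_split s q ?_
  rw [← LinearMap.cancel_right hq]
  refine LinearMap.ext fun x => ?_
  have h1 : (q.quotKerEquivOfSurjective hq).symm (q x) = (LinearMap.ker q).mkQ x := by
    rw [LinearEquiv.symm_apply_eq]; rfl
  have h2 : q (f (k x)) = 0 := LinearMap.mem_ker.1 (hf ▸ LinearMap.mem_range_self f (k x))
  change q ((LinearMap.ker q).liftQ (LinearMap.id - f ∘ₗ k) hle
    ((q.quotKerEquivOfSurjective hq).symm (q x))) = q x
  rw [h1]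
  simp [h2]
end

section
/- Let Λ be a left and right Noetherian ring such that every finitely generated right Λ-module N with Hom_{Λ^op}(N, Λ) projective is itself projective. Then fin.dim Λ = 0, i.e., every finitely generated left Λ-module of finite projective dimension is projective. -/
/-!
It suffices to show that every injection `f : P → Λᵏ` of left modules, with `P` finitely generated
projective, splits: then in a free presentation `0 → K → Λᵏ → M → 0` with `K` projective,
`M` is projective, and induction on the projective dimension (Noetherianity keeps syzygies finitely
generated) reduces everything to that case.

To split `f`, write `N` for the cokernel of the dual map `(Λᵏ)* → P*`. The dual of `N` is the kernel
of `P** → (Λᵏ)**`, which is `f` up to biduality, hence zero. Zero is projective, so by hypothesis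
`N` is a finitely generated projective right module, and as its dual vanishes, `N = 0`. Thus every
functional on `P` extends along `f` to `Λᵏ`; extending a dual basis of `P` gives a retraction.

Biduality is handled by a dual basis throughout: if `s : Λⁿ → P` has a section `i`, with coordinates
`εⱼ = prⱼ ∘ i` and vectors `sⱼ = s(eⱼ)`, then `φ = ∑ εⱼ · φ(sⱼ)` for every `φ : P → Λ`.
-/

open CategoryTheory

/-- A projective right module with zero dual is zero. -/
lemma subsingleton_of_dual_eq_zero {Λ : Type} [Ring Λ] {N : Type} [AddCommGroup N]
    [Module Λᵐᵒᵖ N] [Module.Projective Λᵐᵒᵖ N] (h0 : ∀ g : N →ₗ[Λᵐᵒᵖ] Λ, g = 0) :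
    Subsingleton N := by
  obtain ⟨σ, hσ⟩ := (Module.projective_def' (R := Λᵐᵒᵖ) (P := N)).1 inferInstance
  -- The coordinates of `σ` take values in `Λᵐᵒᵖ`; `u` turns them into elements of the dual of `N`.
  let u : Λᵐᵒᵖ →ₗ[Λᵐᵒᵖ] Λ :=
    { toFun := MulOpposite.unop
      map_add' := fun _ _ => rfl
      map_smul' := fun _ _ => rfl }
  have hz : ∀ x, σ x = 0 := by
    intro x
    ext b
    have := LinearMap.congr_fun (h0 (u.comp ((Finsupp.lapply b).comp σ))) x
    exact congrArg MulOpposite.op this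
  refine subsingleton_of_forall_eq 0 fun x => ?_
  have := LinearMap.congr_fun hσ x
  simpa [hz] using this.symm

/-- The dual basis lemma for finitely generated projective modules. -/
lemma exists_dual_basis {Λ : Type} [Ring Λ] (P : Type) [AddCommGroup P] [Module Λ P]
    [Module.Finite Λ P] [Module.Projective Λ P] :
    ∃ (n : ℕ) (ε : Fin n → (P →ₗ[Λ] Λ)) (v : Fin n → P), ∀ p, ∑ j, ε j p • v j = p := by
  obtain ⟨n, s, hs⟩ := Module.Finite.exists_fin' Λ P
  obtain ⟨i, hi⟩ := Module.projective_lifting_property s LinearMap.id hs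
  refine ⟨n, fun j => (LinearMap.proj j).comp i, fun j => s (Pi.single j 1), fun p => ?_⟩
  have h1 := LinearMap.congr_fun hi p
  simp only [LinearMap.comp_apply, LinearMap.id_apply, LinearMap.proj_apply] at h1 ⊢
  conv_rhs => rw [← h1, pi_eq_sum_univ' (i p), map_sum]
  exact Finset.sum_congr rfl fun j _ => (map_smul s _ _).symm

/-- Under the hypothesis on right modules, an injection from a finitely generated projective left
module into a finitely generated free one splits. -/
lemma exists_retraction (Λ : Type) [Ring Λ]
    (h : ∀ (N : Type) [AddCommGroup N] [Module Λᵐᵒᵖ N] [Module.Finite Λᵐᵒᵖ N],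
      Module.Projective Λ (N →ₗ[Λᵐᵒᵖ] Λ) → Module.Projective Λᵐᵒᵖ N)
    (P : Type) [AddCommGroup P] [Module Λ P] [Module.Finite Λ P] [Module.Projective Λ P]
    (k : ℕ) (f : P →ₗ[Λ] (Fin k → Λ)) (hf : Function.Injective f) :
    ∃ r : (Fin k → Λ) →ₗ[Λ] P, r.comp f = LinearMap.id := by
  obtain ⟨n, ε, v, hv⟩ := exists_dual_basis (Λ := Λ) P
  have hexp : ∀ φ : P →ₗ[Λ] Λ, ∑ j, MulOpposite.op (φ (v j)) • ε j = φ := by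
    intro φ
    ext p
    conv_rhs => rw [← hv p]
    simp
  have : Module.Finite Λᵐᵒᵖ (P →ₗ[Λ] Λ) := by
    refine ⟨Submodule.fg_def.2 ⟨Set.range ε, Set.finite_range ε, ?_⟩⟩
    rw [eq_top_iff]
    intro φ _
    rw [← hexp φ]
    exact Submodule.sum_mem _ fun j _ =>
      Submodule.smul_mem _ _ (Submodule.subset_span ⟨j, rfl⟩)
  have h0 : ∀ g : ((P →ₗ[Λ] Λ) ⧸ LinearMap.range (dualMap f)) →ₗ[Λᵐᵒᵖ] Λ, g = 0 := by
    intro g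
    -- `g ∘ mkQ : P* → Λ` is evaluation at `p`; it vanishes on the image of `(Λᵏ)*`, so `f p = 0`.
    let G := g.comp (LinearMap.range (dualMap f)).mkQ
    let p : P := ∑ j, G (ε j) • v j
    have hG : ∀ φ, G φ = φ p := by
      intro φ
      conv_lhs => rw [← hexp φ]
      simp only [p, map_sum, map_smul, op_smul_eq_mul, smul_eq_mul]
    have hfp : f p = 0 := by
      ext j
      have h1 := hG (dualMap f (LinearMap.proj j))
      have h2 : G (dualMap f (LinearMap.proj j)) = 0 := by
        have : (LinearMap.range (dualMap f)).mkQ (dualMap f (LinearMap.proj j)) = 0 := by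
          rw [Submodule.mkQ_apply, Submodule.Quotient.mk_eq_zero]
          exact ⟨_, rfl⟩
        simp only [G, LinearMap.comp_apply, this, map_zero]
      rw [h2] at h1
      exact h1.symm
    have hp : p = 0 := hf (by rw [hfp, map_zero])
    refine LinearMap.ext fun x => ?_
    obtain ⟨φ, rfl⟩ := Submodule.mkQ_surjective _ x
    have := hG φ
    rw [hp, map_zero] at this
    exact this
  have : Subsingleton (((P →ₗ[Λ] Λ) ⧸ LinearMap.range (dualMap f)) →ₗ[Λᵐᵒᵖ] Λ) :=
    subsingleton_of_forall_eq 0 h0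
  have : Module.Projective Λᵐᵒᵖ ((P →ₗ[Λ] Λ) ⧸ LinearMap.range (dualMap f)) :=
    h _ inferInstance
  have hN := subsingleton_of_dual_eq_zero h0
  rw [Submodule.Quotient.subsingleton_iff, LinearMap.range_eq_top] at hN
  choose q hq using fun j => hN (ε j)
  refine ⟨∑ j, (LinearMap.toSpanSingleton Λ P (v j)).comp (q j), ?_⟩
  ext p
  have hq' : ∀ j, q j (f p) = ε j p := fun j => LinearMap.congr_fun (hq j) p
  simp [hq', hv]

/-- `pdLE`, phrased with derived functors of `Hom`, implies the bound on the Mathlib projective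
dimension. Both kinds of `Ext` are the cohomology of `Hom(P•, -)` for a projective resolution. -/
lemma hasProjectiveDimensionLT_of_pdLE (Λ : Type) [Ring Λ] (M : ModuleCat.{0} Λ) (n : ℕ)
    (hM : pdLE Λ M n) : HasProjectiveDimensionLT M (n + 1) := by
  refine hasProjectiveDimensionLT_of_enoughInjectives M (n + 1) fun Y => ?_
  refine subsingleton_of_forall_eq 0 fun α => ?_
  let R : ProjectiveResolution M := projectiveResolution M
  obtain ⟨φ, hφ, rfl⟩ := R.extMk_surjective α (n + 2) rfl
  rw [R.extMk_eq_zero_iff _ _ _ _ n rfl]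
  have hz : Limits.IsZero ((R.complex.linearYonedaObj ℤ Y).homology (n + 1)) := by
    refine Limits.IsZero.of_iso ?_ (R.isoExt (R := ℤ) (n + 1) Y).symm
    have := hM Y
    exact ModuleCat.isZero_of_subsingleton (extGrp Λ (n + 1) M Y)
  rw [← HomologicalComplex.exactAt_iff_isZero_homology,
    HomologicalComplex.exactAt_iff' _ n (n + 1) (n + 2) (by simp) (by simp),
    ShortComplex.moduleCat_exact_iff] at hz
  exact hz φ hφ

/-- Induction on the projective dimension: the kernel of a finite free cover of `M` is projective, so
its inclusion splits. -/
lemma projective_of_hasProjectiveDimensionLT (Λ : Type) [Ring Λ] [IsNoetherianRing Λ]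
    (h : ∀ (N : Type) [AddCommGroup N] [Module Λᵐᵒᵖ N] [Module.Finite Λᵐᵒᵖ N],
      Module.Projective Λ (N →ₗ[Λᵐᵒᵖ] Λ) → Module.Projective Λᵐᵒᵖ N) (n : ℕ) :
    ∀ (M : Type) [AddCommGroup M] [Module Λ M] [Module.Finite Λ M],
      HasProjectiveDimensionLT (ModuleCat.of Λ M) (n + 1) → Module.Projective Λ M := by
  induction n with
  | zero =>
    intro M _ _ _ hM
    rwa [IsProjective.iff_projective, projective_iff_hasProjectiveDimensionLT_one]
  | succ n ih =>
    intro M _ _ _ hM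
    obtain ⟨k, s, hs⟩ := Module.Finite.exists_fin' Λ M
    have hS := LinearMap.shortExact_shortComplexKer hs
    have hK := (hS.hasProjectiveDimensionLT_X₃_iff n
      ((IsProjective.iff_projective (Fin k → Λ)).1 inferInstance)).1 hM
    have : Module.Projective Λ (LinearMap.ker s) := ih _ hK
    have hr := exists_retraction Λ h (LinearMap.ker s) k (LinearMap.ker s).subtype
      (Submodule.subtype_injective _)
    have hex : Function.Exact (LinearMap.ker s).subtype s := LinearMap.exact_subtype_ker_map s
    obtain ⟨l, hl⟩ := ((hex.split_tfae (Submodule.subtype_injective _) hs).out 0 1).2 hr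
    exact Module.Projective.of_split l s hl

/-- If every f.g. right module with projective dual is projective, then `fin.dim Λ = 0`. -/
theorem stmt_5 (Λ : Type) [Ring Λ] [IsNoetherianRing Λ] [IsNoetherianRing Λᵐᵒᵖ]
    (h : ∀ (N : Type) [AddCommGroup N] [Module Λᵐᵒᵖ N] [Module.Finite Λᵐᵒᵖ N],
      Module.Projective Λ (N →ₗ[Λᵐᵒᵖ] Λ) → Module.Projective Λᵐᵒᵖ N)
    (M : Type) [AddCommGroup M] [Module Λ M] [Module.Finite Λ M]
    (hM : ∃ n, pdLE Λ (ModuleCat.of Λ M) n) :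
    Module.Projective Λ M := by
  obtain ⟨n, hn⟩ := hM
  exact projective_of_hasProjectiveDimensionLT Λ h n M (hasProjectiveDimensionLT_of_pdLE Λ _ n hn)
end

section
/- Let Λ be a left and right Noetherian ring and k a non-negative integer. If Λ is (k+1)-Gorenstein and fin.dim Λ ≤ k, then the injective dimension of Λ as a left Λ-module is at most k. -/
/-!
Let `M` be a finitely generated left module and `X = Ext^{k+1}(M, Λ)`, a finitely generated right
module. The Gorenstein condition gives `Ext^j(X, Λ) = 0` for `j ≤ k`. Hence, for a resolution
`Q` of `X` by finitely generated projectives, the dual complex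
`0 → Q₀* → Q₁* → ⋯ → Q_{k+1}*` is exact except at its last term, and is a projective resolution of
the left module `L = coker (Q_k* → Q_{k+1}*)`. So `pd L ≤ k + 1`, and then `pd L ≤ k` by the
hypothesis on the finitistic dimension. By dimension shifting (`coker_shift`) it follows that
`Ext¹(coker (Q₀* → Q₁*), Q₀*) = Ext^{k+1}(L, Q₀*) = 0`, i.e. `Q₀* → Q₁*` is a split injection.
Finitely generated projectives are reflexive (`evalR_bijective`), so dualizing back shows that
`Q₁ → Q₀` is surjective and `X = 0` (`subsingleton_of_ext_eq_zero`).

Thus `Ext^{k+1}(M, Λ) = 0` for every finitely generated `M`, and by Baer's criterion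
(`injDim_of_finite`) this bounds the injective dimension of `Λ`. The groups `extGrp` of the
statement are translated to `Abelian.Ext`, where long exact sequences are available, by
`extGrp_subsingleton_iff_ext`.
-/

open CategoryTheory

/-! ### Comparison with `Abelian.Ext` -/

section ExtBridge
variable {Λ : Type} [Ring Λ]

theorem extGrp_subsingleton_iff_exactAt (n : ℕ) (M N : ModuleCat Λ)
    (P : ProjectiveResolution M) :
    Subsingleton (extGrp Λ n M N) ↔ (P.complex.linearYonedaObj ℤ N).ExactAt n := by
  rw [HomologicalComplex.exactAt_iff_isZero_homology, ModuleCat.isZero_iff_subsingleton]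
  exact (P.isoExt (R := ℤ) n N).toLinearEquiv.toEquiv.subsingleton_congr

/-- Vanishing of `extGrp` in positive degree, as every cocycle on a projective resolution
being a coboundary; this is also the criterion for `Abelian.Ext` provided by `extMk_eq_zero_iff`. -/
theorem extGrp_succ_subsingleton_iff (n : ℕ) (M N : ModuleCat Λ)
    (P : ProjectiveResolution M) :
    Subsingleton (extGrp Λ (n + 1) M N) ↔
      ∀ f : P.complex.X (n + 1) ⟶ N, P.complex.d (n + 2) (n + 1) ≫ f = 0 →
        ∃ g : P.complex.X n ⟶ N, P.complex.d (n + 1) n ≫ g = f := by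
  rw [extGrp_subsingleton_iff_exactAt n.succ M N P,
    HomologicalComplex.exactAt_iff' _ n (n + 1) (n + 2) (by simp) (by simp),
    ShortComplex.moduleCat_exact_iff]
  rfl

theorem extGrp_subsingleton_iff_ext (n : ℕ) (M N : ModuleCat Λ) :
    Subsingleton (extGrp Λ (n + 1) M N) ↔ Subsingleton (Abelian.Ext M N (n + 1)) := by
  let P := projectiveResolution M
  rw [extGrp_succ_subsingleton_iff n M N P]
  constructor
  · intro h
    refine subsingleton_of_forall_eq 0 fun α => ?_
    obtain ⟨f, hf, rfl⟩ := P.extMk_surjective α (n + 2) rfl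
    exact (P.extMk_eq_zero_iff f (n + 2) rfl hf n rfl).2 (h f hf)
  · intro h f hf
    exact (P.extMk_eq_zero_iff f (n + 2) rfl hf n rfl).1 (Subsingleton.elim _ _)

/-- The degree-zero group is `Hom(M, N)`; only its vanishing is needed. -/
theorem hom_eq_zero_of_extGrp_zero (M N : ModuleCat Λ) (h : Subsingleton (extGrp Λ 0 M N))
    (φ : M →ₗ[Λ] N) : φ = 0 := by
  let P := projectiveResolution M
  obtain ⟨π, hd, _⟩ : ∃ π : P.complex.X 0 ⟶ M, P.complex.d 1 0 ≫ π = 0 ∧ Epi π :=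
    ⟨P.π.f 0, P.complex_d_comp_π_f_zero, inferInstanceAs (Epi (P.π.f 0))⟩
  rw [extGrp_subsingleton_iff_exactAt 0 M N P, HomologicalComplex.exactAt_iff' _ 0 0 1 (by simp)
    (by simp), ShortComplex.moduleCat_exact_iff] at h
  obtain ⟨g, hg⟩ := h (π ≫ ModuleCat.ofHom φ) (by
    change P.complex.d 1 0 ≫ π ≫ ModuleCat.ofHom φ = 0
    rw [← Category.assoc, hd, Limits.zero_comp])
  -- The differential coming into degree `0` is zero.
  have h0 : π ≫ (ModuleCat.ofHom φ : M ⟶ N) = 0 := by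
    have e : P.complex.d 0 0 ≫ g = π ≫ ModuleCat.ofHom φ := hg
    rw [← e, P.complex.shape _ _ (by simp)]
    exact Limits.zero_comp
  have := (cancel_epi π).1 (h0.trans (Limits.comp_zero).symm)
  exact congrArg ModuleCat.Hom.hom this

end ExtBridge

/-! ### Dimension shifting and injective dimension -/

section Shift
variable {Λ : Type} [Ring Λ] {A B C : Type} [AddCommGroup A] [Module Λ A]
  [AddCommGroup B] [Module Λ B] [AddCommGroup C] [Module Λ C]

theorem exists_shortExact (f : A →ₗ[Λ] B) (g : B →ₗ[Λ] C) (hf : Function.Injective f)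
    (hg : Function.Surjective g) (hfg : LinearMap.range f = LinearMap.ker g) :
    ∃ w, (ShortComplex.mk (ModuleCat.ofHom f) (ModuleCat.ofHom g) w).ShortExact := by
  have hex : Function.Exact f g := LinearMap.exact_iff.2 hfg.symm
  exact ⟨by ext x; exact hex.apply_apply_eq_zero x,
    ModuleCat.shortComplex_shortExact _ hex hf hg⟩

theorem ext_shift_left [Module.Projective Λ B] (f : A →ₗ[Λ] B) (g : B →ₗ[Λ] C)
    (hf : Function.Injective f) (hg : Function.Surjective g)
    (hfg : LinearMap.range f = LinearMap.ker g) (N : ModuleCat Λ) (n : ℕ) :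
    Subsingleton (Abelian.Ext (ModuleCat.of Λ C) N (n + 2)) ↔
      Subsingleton (Abelian.Ext (ModuleCat.of Λ A) N (n + 1)) := by
  obtain ⟨w, hS⟩ := exists_shortExact f g hf hg hfg
  have : Projective (ModuleCat.of Λ B) := (IsProjective.iff_projective B).1 inferInstance
  constructor
  · intro h
    refine subsingleton_of_forall_eq 0 fun α => ?_
    obtain ⟨x, rfl⟩ := Abelian.Ext.contravariant_sequence_exact₁ hS N α (n₁ := n + 2) (by omega)
      (@Subsingleton.elim _ h _ _)
    rw [Abelian.Ext.eq_zero_of_projective (P := ModuleCat.of Λ B) x, Abelian.Ext.comp_zero]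
  · intro h
    refine subsingleton_of_forall_eq 0 fun α => ?_
    obtain ⟨x, rfl⟩ := Abelian.Ext.contravariant_sequence_exact₃ hS N α
      (Abelian.Ext.eq_zero_of_projective (P := ModuleCat.of Λ B) _) (n₀ := n + 1) (by omega)
    rw [@Subsingleton.elim _ h x 0, Abelian.Ext.comp_zero]

theorem ext_one_extend {N : Type} [AddCommGroup N] [Module Λ N] (f : A →ₗ[Λ] B) (g : B →ₗ[Λ] C)
    (hf : Function.Injective f) (hg : Function.Surjective g)
    (hfg : LinearMap.range f = LinearMap.ker g)
    (h : Subsingleton (Abelian.Ext (ModuleCat.of Λ C) (ModuleCat.of Λ N) 1))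
    (φ : A →ₗ[Λ] N) : ∃ ψ : B →ₗ[Λ] N, ψ ∘ₗ f = φ := by
  obtain ⟨w, hS⟩ := exists_shortExact f g hf hg hfg
  obtain ⟨x, hx⟩ := Abelian.Ext.contravariant_sequence_exact₁ hS _
    (Abelian.Ext.mk₀ (ModuleCat.ofHom φ)) (n₁ := 1) rfl (@Subsingleton.elim _ h _ _)
  obtain ⟨ψ, rfl⟩ := Abelian.Ext.homEquiv₀.symm.surjective x
  refine ⟨ψ.hom, ?_⟩
  rw [Abelian.Ext.homEquiv₀_symm_apply, Abelian.Ext.mk₀_comp_mk₀] at hx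
  have := Abelian.Ext.homEquiv₀.symm.injective hx
  exact congrArg ModuleCat.Hom.hom this

/-- A class in `Ext¹(C, N)` comes from a map `A → N` since `B` is projective, and maps extending to
`B` give the zero class. -/
theorem ext_one_of_extend {N : Type} [AddCommGroup N] [Module Λ N] [Module.Projective Λ B]
    (f : A →ₗ[Λ] B) (g : B →ₗ[Λ] C)
    (hf : Function.Injective f) (hg : Function.Surjective g)
    (hfg : LinearMap.range f = LinearMap.ker g)
    (h : ∀ φ : A →ₗ[Λ] N, ∃ ψ : B →ₗ[Λ] N, ψ ∘ₗ f = φ) :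
    Subsingleton (Abelian.Ext (ModuleCat.of Λ C) (ModuleCat.of Λ N) 1) := by
  obtain ⟨w, hS⟩ := exists_shortExact f g hf hg hfg
  have : Projective (ModuleCat.of Λ B) := (IsProjective.iff_projective B).1 inferInstance
  refine subsingleton_of_forall_eq 0 fun α => ?_
  obtain ⟨x, rfl⟩ := Abelian.Ext.contravariant_sequence_exact₃ hS _ α
    (Abelian.Ext.eq_zero_of_projective (P := ModuleCat.of Λ B) _) (n₀ := 0) rfl
  obtain ⟨φ, rfl⟩ := Abelian.Ext.homEquiv₀.symm.surjective x
  obtain ⟨ψ, hψ⟩ := h φ.hom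
  have e : φ = ModuleCat.ofHom f ≫ ModuleCat.ofHom ψ := by
    ext1; exact hψ.symm
  rw [Abelian.Ext.homEquiv₀_symm_apply, e, ← Abelian.Ext.mk₀_comp_mk₀]
  exact hS.extClass_comp_assoc _

theorem ext_shift_right {A B C : ModuleCat Λ} [Injective B] (f : A ⟶ B) (g : B ⟶ C) (w : f ≫ g = 0)
    (hS : (ShortComplex.mk f g w).ShortExact) (M : ModuleCat Λ) (n : ℕ)
    (h : Subsingleton (Abelian.Ext M A (n + 2))) : Subsingleton (Abelian.Ext M C (n + 1)) := by
  refine subsingleton_of_forall_eq 0 fun α => ?_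
  obtain ⟨x, rfl⟩ := Abelian.Ext.covariant_sequence_exact₃ M hS α (n₁ := n + 2) rfl
    (@Subsingleton.elim _ h _ _)
  rw [Abelian.Ext.eq_zero_of_injective (I := B) x, Abelian.Ext.zero_comp]

/-- Injective dimension is detected by finitely generated test modules: cosyzygies reduce to
degree one, where Baer's criterion only involves cyclic modules. -/
theorem injDim_of_finite (n : ℕ) (A : ModuleCat Λ)
    (h : ∀ (M : Type) [AddCommGroup M] [Module Λ M] [Module.Finite Λ M],
      Subsingleton (Abelian.Ext (ModuleCat.of Λ M) A (n + 1))) :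
    HasInjectiveDimensionLE A n := by
  induction n generalizing A with
  | zero =>
    have : Injective A := by
      refine (Module.injective_iff_injective_object Λ A).1 (Module.Baer.iff_injective.1 ?_)
      intro I g
      obtain ⟨ψ, hψ⟩ := ext_one_extend I.subtype I.mkQ I.subtype_injective I.mkQ_surjective
        (by simp) (h (Λ ⧸ I)) g
      exact ⟨ψ, fun x hx => LinearMap.congr_fun hψ ⟨x, hx⟩⟩
    exact injective_iff_hasInjectiveDimensionLT_one.1 this
  | succ n ih =>
    obtain ⟨I, _, f, _⟩ := EnoughInjectives.presentation A
    have hS : (ShortComplex.mk f (Limits.cokernel.π f) (Limits.cokernel.condition f)).ShortExact :=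
      { exact := ShortComplex.exact_cokernel f }
    refine (hS.hasInjectiveDimensionLT_X₃_iff n ‹_›).1 (ih _ fun M _ _ _ => ?_)
    exact ext_shift_right f _ _ hS _ n (h M)

end Shift

/-! ### Resolutions by finitely generated projectives -/

section Resolutions
variable {Λ : Type} [Ring Λ]

/-- The resolution of the first syzygy of `M` obtained by dropping the degree-zero term. -/
def FGProjRes.tail {M : Type} [AddCommGroup M] [Module Λ M] (R : FGProjRes Λ M) :
    FGProjRes Λ (LinearMap.range (R.d 0)) where
  P n := R.P (n + 1)
  d n := R.d (n + 1)
  π := (R.d 0).rangeRestrict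
  surj := (R.d 0).surjective_rangeRestrict
  exact0 := by rw [LinearMap.ker_rangeRestrict]; exact R.exact 0
  exact n := R.exact (n + 1)

/-- Exactness of `Hom(P•, N)` in degree `t + 1`: every `(t + 1)`-cocycle is a coboundary. -/
def FGProjRes.Crit {M : Type} [AddCommGroup M] [Module Λ M] (R : FGProjRes Λ M)
    (t : ℕ) (N : Type) [AddCommGroup N] [Module Λ N] : Prop :=
  ∀ φ : R.P (t + 1) →ₗ[Λ] N, φ ∘ₗ R.d (t + 1) = 0 → ∃ ψ : R.P t →ₗ[Λ] N, ψ ∘ₗ R.d t = φ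

theorem exists_factor_s6 {A B N : Type} [AddCommGroup A] [Module Λ A] [AddCommGroup B] [Module Λ B]
    [AddCommGroup N] [Module Λ N] (p : A →ₗ[Λ] B) (hp : Function.Surjective p)
    (φ : A →ₗ[Λ] N) (h : LinearMap.ker p ≤ LinearMap.ker φ) :
    ∃ ψ : B →ₗ[Λ] N, ψ ∘ₗ p = φ := by
  refine ⟨(LinearMap.ker p).liftQ φ h ∘ₗ (p.quotKerEquivOfSurjective hp).symm.toLinearMap, ?_⟩
  ext x
  have : (p.quotKerEquivOfSurjective hp).symm (p x) = Submodule.Quotient.mk x := by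
    rw [LinearEquiv.symm_apply_eq]; rfl
  simp [this]

/-- The resolution `R` computes the vanishing of `Ext^{t+1}(M, N)`: degree one is the presentation
`0 → range d₀ → P₀ → M → 0`, and higher degrees follow by passing to the tail of `R`. -/
theorem FGProjRes.ext_iff_crit (t : ℕ) (N : Type) [AddCommGroup N] [Module Λ N] :
    ∀ {M : Type} [AddCommGroup M] [Module Λ M] (R : FGProjRes Λ M),
      Subsingleton (Abelian.Ext (ModuleCat.of Λ M) (ModuleCat.of Λ N) (t + 1)) ↔ R.Crit t N := by
  induction t with
  | zero =>
    intro M _ _ R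
    have hi := (LinearMap.range (R.d 0)).subtype_injective
    have he : LinearMap.range (LinearMap.range (R.d 0)).subtype = LinearMap.ker R.π := by
      simpa using R.exact0
    constructor
    · intro h φ hφ
      obtain ⟨φ', hφ'⟩ := exists_factor_s6 (R.d 0).rangeRestrict (R.d 0).surjective_rangeRestrict φ (by
        rw [LinearMap.ker_rangeRestrict, ← R.exact 0]
        exact LinearMap.range_le_ker_iff.2 hφ)
      obtain ⟨ψ, hψ⟩ := ext_one_extend _ R.π hi R.surj he h φ'
      exact ⟨ψ, by rw [← hφ', ← hψ]; rfl⟩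
    · intro h
      refine ext_one_of_extend _ R.π hi R.surj he fun φ => ?_
      obtain ⟨ψ, hψ⟩ := h (φ ∘ₗ (R.d 0).rangeRestrict) (by
        ext x
        have : R.d 0 (R.d 1 x) = 0 := by
          have : R.d 1 x ∈ LinearMap.ker (R.d 0) := R.exact 0 ▸ LinearMap.mem_range_self _ x
          exact this
        have h0 : (R.d 0).rangeRestrict (R.d 1 x) = 0 := Subtype.ext this
        simp [h0])
      refine ⟨ψ, ?_⟩
      ext ⟨_, x, rfl⟩
      exact LinearMap.congr_fun hψ x
  | succ t ih =>
    intro M _ _ R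
    exact (ext_shift_left (LinearMap.range (R.d 0)).subtype R.π
      (LinearMap.range (R.d 0)).subtype_injective R.surj (by simpa using R.exact0) _ t).trans
        (ih R.tail)

section Existence

/-- Finitely generated modules, bundled so that a syzygy can be iterated. -/
abbrev FGMod (Λ : Type) [Ring Λ] : Type 1 := {M : ModuleCat.{0} Λ // Module.Finite Λ M}

instance (M : FGMod Λ) : Module.Finite Λ M.1 := M.2

/-- The rank of a chosen finite free module surjecting onto `M`. -/
noncomputable def FGMod.rank (M : FGMod Λ) : ℕ := (Module.Finite.exists_fin' Λ M.1).choose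

/-- A chosen surjection onto `M` from a finite free module. -/
noncomputable def FGMod.cover (M : FGMod Λ) : (Fin M.rank → Λ) →ₗ[Λ] M.1 :=
  (Module.Finite.exists_fin' Λ M.1).choose_spec.choose

theorem FGMod.cover_surjective (M : FGMod Λ) : Function.Surjective M.cover :=
  (Module.Finite.exists_fin' Λ M.1).choose_spec.choose_spec

variable [IsNoetherianRing Λ]

/-- The `n`-th syzygy of `M` with respect to the chosen free covers; it stays finitely generated
because `Λ` is Noetherian. -/
noncomputable def FGMod.syzygy (M : FGMod Λ) : ℕ → FGMod Λ
  | 0 => M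
  | n + 1 => ⟨ModuleCat.of Λ (LinearMap.ker (M.syzygy n).cover),
      inferInstanceAs (Module.Finite Λ (LinearMap.ker (M.syzygy n).cover))⟩

theorem nonempty_fgProjRes (M : Type) [AddCommGroup M] [Module Λ M] [hM : Module.Finite Λ M] :
    Nonempty (FGProjRes Λ M) := by
  let K := FGMod.syzygy (⟨ModuleCat.of Λ M, hM⟩ : FGMod Λ)
  let i : ∀ n, (K (n + 1)).1 →ₗ[Λ] (Fin (K n).rank → Λ) :=
    fun n => (LinearMap.ker (K n).cover).subtype
  have hi : ∀ n, Function.Injective (i n) := fun n => (LinearMap.ker (K n).cover).subtype_injective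
  have hir : ∀ n, LinearMap.range (i n ∘ₗ (K (n + 1)).cover) = LinearMap.ker (K n).cover := by
    intro n
    rw [LinearMap.range_comp_of_range_eq_top _
      (LinearMap.range_eq_top.2 (FGMod.cover_surjective _))]
    exact (LinearMap.ker (K n).cover).range_subtype
  exact ⟨{
    P := fun n => Fin (K n).rank → Λ
    d := fun n => i n ∘ₗ (K (n + 1)).cover
    π := (K 0).cover
    surj := (K 0).cover_surjective
    exact0 := hir 0
    exact := fun n => by
      rw [hir, LinearMap.ker_comp_of_ker_eq_bot _ (LinearMap.ker_eq_bot.2 (hi n))] }⟩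

end Existence
end Resolutions

/-! ### Duality for finitely generated projectives -/

section Duality
variable {Λ : Type} [Ring Λ]

/-- The dual basis lemma, for a finite family. -/
theorem exists_dualBasis_s6 (A P : Type) [Ring A] [AddCommGroup P] [Module A P]
    [Module.Finite A P] [Module.Projective A P] :
    ∃ (m : ℕ) (e : Fin m → P) (f : Fin m → P →ₗ[A] A), ∀ p, ∑ j, f j p • e j = p := by
  obtain ⟨m, r, hr⟩ := Module.Finite.exists_fin' A P
  obtain ⟨s, hs⟩ := Module.projective_lifting_property r LinearMap.id hr
  refine ⟨m, fun j => r (Pi.single j 1), fun j => LinearMap.proj j ∘ₗ s, fun p => ?_⟩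
  have : r (s p) = p := LinearMap.congr_fun hs p
  conv_rhs => rw [← this, pi_eq_sum_univ' (s p)]
  simp [map_sum]

theorem finite_dual (P : Type) [AddCommGroup P] [Module Λ P]
    [Module.Finite Λ P] [Module.Projective Λ P] : Module.Finite Λᵐᵒᵖ (P →ₗ[Λ] Λ) := by
  obtain ⟨m, e, f, h⟩ := exists_dualBasis_s6 Λ P
  classical
  refine ⟨⟨Finset.univ.image f, eq_top_iff.2 fun φ _ => ?_⟩⟩
  have : φ = ∑ j, MulOpposite.op (φ (e j)) • f j := by
    ext p
    conv_lhs => rw [← h p]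
    simp
  rw [this]
  exact Submodule.sum_mem _ fun j _ => Submodule.smul_mem _ _ (Submodule.subset_span (by simp))

section Right
variable (Q : Type) [AddCommGroup Q] [Module Λᵐᵒᵖ Q] [Module.Finite Λᵐᵒᵖ Q]
    [Module.Projective Λᵐᵒᵖ Q]

/-- The dual basis lemma for right modules, with functionals valued in `Λ` instead of `Λᵐᵒᵖ`; the
functionals then generate the dual left module. -/
theorem exists_dualBasis_right :
    ∃ (m : ℕ) (e : Fin m → Q) (f : Fin m → Q →ₗ[Λᵐᵒᵖ] Λ),
      (∀ q, ∑ j, MulOpposite.op (f j q) • e j = q) ∧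
        ∀ φ : Q →ₗ[Λᵐᵒᵖ] Λ, ∑ j, φ (e j) • f j = φ := by
  obtain ⟨m, e, f, h⟩ := exists_dualBasis_s6 Λᵐᵒᵖ Q
  -- `unop` identifies the regular module `Λᵐᵒᵖ` with `Λ` viewed as a right module over itself.
  let u : Λᵐᵒᵖ →ₗ[Λᵐᵒᵖ] Λ :=
    { toFun := MulOpposite.unop, map_add' := fun _ _ => rfl, map_smul' := fun _ _ => rfl }
  have h' : ∀ q, ∑ j, MulOpposite.op ((u ∘ₗ f j) q) • e j = q := h
  refine ⟨m, e, fun j => u ∘ₗ f j, h', fun φ => ?_⟩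
  ext q
  conv_rhs => rw [← h' q]
  simp

theorem finite_projective_dual_right :
    Module.Finite Λ (Q →ₗ[Λᵐᵒᵖ] Λ) ∧ Module.Projective Λ (Q →ₗ[Λᵐᵒᵖ] Λ) := by
  obtain ⟨m, e, f, -, h⟩ := exists_dualBasis_right (Λ := Λ) Q
  let r : (Fin m → Λ) →ₗ[Λ] (Q →ₗ[Λᵐᵒᵖ] Λ) := Fintype.linearCombination Λ f
  let s : (Q →ₗ[Λᵐᵒᵖ] Λ) →ₗ[Λ] (Fin m → Λ) :=
    { toFun := fun φ j => φ (e j), map_add' := fun _ _ => rfl, map_smul' := fun _ _ => rfl }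
  have hrs : r ∘ₗ s = LinearMap.id := by
    ext1 φ
    exact h φ
  exact ⟨Module.Finite.of_surjective r fun φ => ⟨s φ, LinearMap.congr_fun hrs φ⟩,
    Module.Projective.of_split s r hrs⟩

/-- Finitely generated projective right modules are reflexive. -/
theorem evalR_bijective : Function.Bijective (evalR Λ Q) := by
  obtain ⟨m, e, f, h, h'⟩ := exists_dualBasis_right (Λ := Λ) Q
  constructor
  · rw [injective_iff_map_eq_zero]
    intro q hq
    rw [← h q]
    exact Finset.sum_eq_zero fun j _ => by
      have : f j q = 0 := LinearMap.congr_fun hq (f j)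
      rw [this]; simp
  · intro θ
    refine ⟨∑ j, MulOpposite.op (θ (f j)) • e j, ?_⟩
    ext φ
    conv_rhs => rw [← h' φ]
    simp [evalR]

end Right
end Duality

/-! ### Vanishing of the top Ext module -/

section Vanishing
variable {Λ : Type} [Ring Λ]

/-- If `F 0 → F 1 → ⋯ → F (k + 1)` is exact at `F 1, …, F k`, then the cokernel of `δ 0` is a `k`-th
syzygy of the cokernel of `δ k`. -/
theorem coker_shift (F : ℕ → Type) [∀ n, AddCommGroup (F n)] [∀ n, Module Λ (F n)]
    [∀ n, Module.Projective Λ (F n)] (δ : ∀ n, F n →ₗ[Λ] F (n + 1)) (N : ModuleCat Λ) (j k : ℕ)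
    (hδ : ∀ n < k, LinearMap.range (δ n) = LinearMap.ker (δ (n + 1))) :
    Subsingleton (Abelian.Ext (ModuleCat.of Λ (F (k + 1) ⧸ LinearMap.range (δ k))) N (k + j + 1)) ↔
      Subsingleton (Abelian.Ext (ModuleCat.of Λ (F 1 ⧸ LinearMap.range (δ 0))) N (j + 1)) := by
  induction k with
  | zero => rw [show 0 + j + 1 = j + 1 by omega]
  | succ k ih =>
    have hk := hδ k k.lt_succ_self
    rw [← ih fun n hn => hδ n (hn.trans k.lt_succ_self),
      show k + 1 + j + 1 = k + j + 2 by omega]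
    refine ext_shift_left ((LinearMap.range (δ k)).liftQ (δ (k + 1)) hk.le)
      (LinearMap.range (δ (k + 1))).mkQ ?_ (Submodule.mkQ_surjective _) ?_ N (k + j)
    · rw [← LinearMap.ker_eq_bot, Submodule.ker_liftQ_eq_bot _ _ _ hk.ge]
    · rw [Submodule.range_liftQ, Submodule.ker_mkQ]

/-- A finitely generated right module `X` with `Ext^j(X, Λ) = 0` for all `j ≤ k` is zero when the
finitistic dimension is at most `k`. Dualizing a projective resolution of `X` produces a left module
of projective dimension at most `k + 1`, and the bound `k` forces the start of the dual complex to
split. -/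
theorem subsingleton_of_ext_eq_zero [IsNoetherianRing Λᵐᵒᵖ] (k : ℕ)
    (hfin : ∀ (M : Type) [AddCommGroup M] [Module Λ M] [Module.Finite Λ M],
      (∃ n, pdLE Λ (ModuleCat.of Λ M) n) → pdLE Λ (ModuleCat.of Λ M) k)
    (X : Type) [AddCommGroup X] [Module Λᵐᵒᵖ X] [Module.Finite Λᵐᵒᵖ X]
    (hX : ∀ j ≤ k, Subsingleton
      (extGrp Λᵐᵒᵖ j (ModuleCat.of Λᵐᵒᵖ X) (ModuleCat.of Λᵐᵒᵖ Λ))) :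
    Subsingleton X := by
  obtain ⟨Q⟩ := nonempty_fgProjRes (Λ := Λᵐᵒᵖ) X
  let F : ℕ → Type := fun n => Q.P n →ₗ[Λᵐᵒᵖ] Λ
  let _ : ∀ n, AddCommGroup (F n) := fun n => inferInstanceAs (AddCommGroup (Q.P n →ₗ[Λᵐᵒᵖ] Λ))
  let _ : ∀ n, Module Λ (F n) := fun n => inferInstanceAs (Module Λ (Q.P n →ₗ[Λᵐᵒᵖ] Λ))
  have _ : ∀ n, Module.Finite Λ (F n) := fun n => (finite_projective_dual_right (Q.P n)).1
  have _ : ∀ n, Module.Projective Λ (F n) := fun n => (finite_projective_dual_right (Q.P n)).2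
  let δ : ∀ n, F n →ₗ[Λ] F (n + 1) := fun n => dualMapR (Q.d n)
  have hinj : Function.Injective (δ 0) := by
    rw [injective_iff_map_eq_zero]
    intro φ hφ
    have hφ' : φ ∘ₗ Q.d 0 = 0 := hφ
    obtain ⟨ψ, hψ⟩ := exists_factor_s6 Q.π Q.surj φ (by
      rw [← Q.exact0]
      exact LinearMap.range_le_ker_iff.2 hφ')
    have hψ0 : ψ = 0 := hom_eq_zero_of_extGrp_zero (ModuleCat.of Λᵐᵒᵖ X) (ModuleCat.of Λᵐᵒᵖ Λ)
      (hX 0 k.zero_le) ψ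
    rw [← hψ, hψ0, LinearMap.zero_comp]
  have hδ : ∀ n < k, LinearMap.range (δ n) = LinearMap.ker (δ (n + 1)) := by
    intro n hn
    have hcrit : Q.Crit n Λ := (Q.ext_iff_crit n Λ).1
      ((extGrp_subsingleton_iff_ext n _ _).1 (hX (n + 1) hn))
    apply le_antisymm
    · rintro _ ⟨ψ, rfl⟩
      change (ψ ∘ₗ Q.d n) ∘ₗ Q.d (n + 1) = 0
      rw [LinearMap.comp_assoc, LinearMap.range_le_ker_iff.1 (Q.exact n).le, LinearMap.comp_zero]
    · intro φ hφ
      exact hcrit φ hφ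
  have hshift := fun N j => coker_shift F δ N j k hδ
  have hmk : LinearMap.range (δ 0) = LinearMap.ker (LinearMap.range (δ 0)).mkQ :=
    (Submodule.ker_mkQ _).symm
  -- Here `0 → F 0 → ⋯ → F (k + 1) → coker (δ k) → 0` is exact, a projective
  -- resolution of length `k + 1`.
  have hpd : pdLE Λ (ModuleCat.of Λ (F (k + 1) ⧸ LinearMap.range (δ k))) k := by
    refine hfin _ ⟨k + 1, fun N => ?_⟩
    rw [extGrp_subsingleton_iff_ext]
    refine (hshift N 1).2 ((ext_shift_left (δ 0) (LinearMap.range (δ 0)).mkQ hinj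
      (Submodule.mkQ_surjective _) hmk N 0).2 ?_)
    exact HasProjectiveDimensionLT.subsingleton (ModuleCat.of Λ (F 0)) 1 1 le_rfl N
  -- `Ext^{k+1}(coker (δ k), F 0) = Ext¹(coker (δ 0), F 0)` vanishes, so `δ 0` is a split injection.
  obtain ⟨s, hs⟩ := ext_one_extend (δ 0) (LinearMap.range (δ 0)).mkQ hinj
    (Submodule.mkQ_surjective _) hmk
    ((hshift (ModuleCat.of Λ (F 0)) 0).1 ((extGrp_subsingleton_iff_ext k _ _).1 (hpd _)))
    LinearMap.id
  have hsurj : Function.Surjective (Q.d 0) := by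
    intro q
    -- By reflexivity, dualizing the retraction `s` gives a section of `Q.d 0`;
    -- here `p` is its value at `q`.
    obtain ⟨p, hp⟩ := (evalR_bijective (Λ := Λ) (Q.P 1)).2 (evalR Λ (Q.P 0) q ∘ₗ s)
    refine ⟨p, (evalR_bijective (Λ := Λ) (Q.P 0)).1 (LinearMap.ext fun ψ => ?_)⟩
    have h1 : ψ (Q.d 0 p) = s (δ 0 ψ) q := LinearMap.congr_fun hp (δ 0 ψ)
    have h2 : s (δ 0 ψ) = ψ := LinearMap.congr_fun hs ψ
    rw [h2] at h1
    exact h1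
  refine subsingleton_of_forall_eq 0 fun x => ?_
  obtain ⟨q, rfl⟩ := Q.surj x
  have hq : q ∈ LinearMap.range (Q.d 0) := hsurj q
  rw [Q.exact0] at hq
  exact hq

/-- Vanishing of the module `extQ (t + 1)` is exactness of the dual complex in degree `t + 1`. -/
theorem FGProjRes.crit_of_subsingleton_extQ {M : Type} [AddCommGroup M] [Module Λ M]
    (R : FGProjRes Λ M) (t : ℕ) (h : Subsingleton (R.extQ (t + 1))) : R.Crit t Λ := by
  intro φ hφ
  have hmem : (⟨φ, hφ⟩ : R.extSub (t + 1)) ∈ R.extBdry (t + 1) :=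
    (Submodule.Quotient.subsingleton_iff.1 h).ge Submodule.mem_top
  exact hmem

end Vanishing


/-- If `Λ` is `(k+1)`-Gorenstein and `fin.dim Λ ≤ k`, then `id_Λ Λ ≤ k`. -/
theorem stmt_6 (Λ : Type) [Ring Λ] [IsNoetherianRing Λ] [IsNoetherianRing Λᵐᵒᵖ] (k : ℕ)
    (hG : IsGorensteinLE Λ (k + 1))
    (hfin : ∀ (M : Type) [AddCommGroup M] [Module Λ M] [Module.Finite Λ M],
      (∃ n, pdLE Λ (ModuleCat.of Λ M) n) → pdLE Λ (ModuleCat.of Λ M) k) :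
    idLambdaLE Λ k := by
  refine fun N => (extGrp_subsingleton_iff_ext k _ _).2 ?_
  have hinj : HasInjectiveDimensionLE (ModuleCat.of Λ Λ) k := by
    refine injDim_of_finite k _ fun M _ _ _ => ?_
    obtain ⟨R⟩ := nonempty_fgProjRes (Λ := Λ) M
    refine (R.ext_iff_crit k Λ).2 (R.crit_of_subsingleton_extQ k ?_)
    -- `extQ (k + 1)` is a subquotient of the dual of `R.P (k + 1)`, hence finitely generated.
    have := finite_dual (Λ := Λ) (R.P (k + 1))
    have hX := subsingleton_of_ext_eq_zero k hfin (⊤ : Submodule Λᵐᵒᵖ (R.extQ (k + 1)))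
      fun j hj => hG M R (k + 1) (Nat.le_add_left 1 k) le_rfl ⊤ j (Nat.lt_succ_of_le hj)
    exact (Submodule.topEquiv (R := Λᵐᵒᵖ) (M := R.extQ (k + 1))).symm.injective.subsingleton
  exact HasInjectiveDimensionLT.subsingleton _ (k + 1) (k + 1) le_rfl N
end
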